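/- For 1 ≤ r ≤ x/4, ∑_{√(x/r) < p ≤ √x} π(x/p) = ∫_{√(x/r)}^{√x} Li(x/u)/(log u) du + O((x/log x)·exp(−c·√(log(x/r)))), where the sum is over primes, for some absolute constant c > 0. -/

import Mathlib

open scoped Classical

/-- The prime counting function with real argument. -/
noncomputable def primePi (y : ℝ) : ℕ := {p : ℕ | p.Prime ∧ (p : ℝ) ≤ y}.ncard

/-- The logarithmic integral `Li y = ∫₂^y du / log u`. -/
noncomputable def Li (y : ℝ) : ℝ := ∫ u in (2 : ℝ)..y, 1 / Real.log u

/-!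
Each `π (x / p)` is `Li (x / p)` up to an admissible error, and partial summation against `π` turns
the sum of `Li (x / p)` into the integral up to boundary terms and an integral of `π - Li`, so
everything rests on `π y - Li y ≪ y * exp (-c * √(log y))`. For this, Landau's local bounds for
the logarithmic derivative and the `3-4-1` inequality give a zero-free region of width `1 / log t`.
The smoothed kernel `x ^ s / (s * (s + 1))` makes the Perron integral converge
absolutely, so the contour can be moved into that region up to height `exp (√(log x))`; the bound
for `ψ₁` so obtained passes to `ψ` by differencing, then to `θ` and `π`.
-/

/-! ### Growth of `(s - 1) ζ(s)` -/

section ZetaGrowth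

open Complex Metric Filter Topology

lemma hasDerivAt_ofReal_cpow_of_pos (a : ℂ) {u : ℝ} (hu : 0 < u) :
    HasDerivAt (fun v : ℝ => (v : ℂ) ^ a) (a * (u : ℂ) ^ (a - 1)) u := by
  simpa using ((hasDerivAt_id (u : ℂ)).cpow_const (c := a) (Or.inl hu)).comp_ofReal

lemma norm_cpow_neg_sub_cpow_neg_le {s : ℂ} (hs : -1 ≤ s.re) {m u : ℝ} (hm : 0 < m)
    (hu : u ∈ Set.Icc m (m + 1)) :
    ‖(u : ℂ) ^ (-s) - (m : ℂ) ^ (-s)‖ ≤ ‖s‖ * m ^ (-s.re - 1) := by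
  have hderiv : ∀ v ∈ Set.Ico m (m + 1), ‖-s * (v : ℂ) ^ (-s - 1)‖ ≤ ‖s‖ * m ^ (-s.re - 1) := by
    intro v hv
    rw [norm_mul, norm_neg, norm_cpow_eq_rpow_re_of_pos (hm.trans_le hv.1)]
    gcongr ‖s‖ * ?_
    simpa using Real.rpow_le_rpow_of_nonpos hm hv.1 (by linarith : -s.re - 1 ≤ 0)
  refine (norm_image_sub_le_of_norm_deriv_le_segment' (fun v hv =>
    (hasDerivAt_ofReal_cpow_of_pos (-s) (hm.trans_le hv.1)).hasDerivWithinAt) hderiv u hu).trans ?_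
  exact mul_le_of_le_one_right (by positivity) (by linarith [hu.2])

lemma norm_cpow_taylor_remainder_le {s : ℂ} (hs : -1 ≤ s.re) {m : ℝ} (hm : 0 < m) :
    ‖((m + 1 : ℝ) : ℂ) ^ (1 - s) - (m : ℂ) ^ (1 - s) - (1 - s) * (m : ℂ) ^ (-s)‖ ≤
      ‖s - 1‖ * ‖s‖ * m ^ (-s.re - 1) := by
  have hderiv : ∀ v ∈ Set.Icc m (m + 1), HasDerivWithinAt
      (fun v : ℝ => (v : ℂ) ^ (1 - s) - (1 - s) * (m : ℂ) ^ (-s) * v)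
      ((1 - s) * ((v : ℂ) ^ (-s) - (m : ℂ) ^ (-s))) (Set.Icc m (m + 1)) v := by
    intro v hv
    have h := (hasDerivAt_ofReal_cpow_of_pos (1 - s) (hm.trans_le hv.1)).sub
      (((hasDerivAt_id (v : ℂ)).comp_ofReal).const_mul ((1 - s) * (m : ℂ) ^ (-s)))
    refine (h.congr_deriv ?_).hasDerivWithinAt
    rw [show 1 - s - 1 = -s by ring]
    ring
  have hbound : ∀ v ∈ Set.Ico m (m + 1),
      ‖(1 - s) * ((v : ℂ) ^ (-s) - (m : ℂ) ^ (-s))‖ ≤ ‖s - 1‖ * ‖s‖ * m ^ (-s.re - 1) := by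
    intro v hv
    rw [norm_mul, norm_sub_rev, mul_assoc]
    gcongr
    exact norm_cpow_neg_sub_cpow_neg_le hs hm ⟨hv.1, hv.2.le⟩
  have hmvt := norm_image_sub_le_of_norm_deriv_le_segment' hderiv hbound (m + 1)
    ⟨by linarith, le_rfl⟩
  rw [add_sub_cancel_left, mul_one] at hmvt
  convert! hmvt using 2
  push_cast
  ring

/-- The terms of the series `(s - 1) ζ(s) = 1 + ∑ n, zetaTerm n s`, obtained by adding the
telescoping series of the differences of `(n + 1) ^ (1 - s)` to that of `(s - 1) (n + 1) ^ (-s)`;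
it converges for `0 < re s`. -/
noncomputable def zetaTerm (n : ℕ) (s : ℂ) : ℂ :=
  ((n + 1 + 1 : ℝ) : ℂ) ^ (1 - s) - ((n + 1 : ℝ) : ℂ) ^ (1 - s) - (1 - s) * ((n + 1 : ℝ) : ℂ) ^ (-s)

lemma norm_zetaTerm_le {σ : ℝ} (hσ : -1 ≤ σ) {s : ℂ} (hs : σ ≤ s.re) (n : ℕ) :
    ‖zetaTerm n s‖ ≤ ‖s - 1‖ * ‖s‖ * (n + 1 : ℝ) ^ (-σ - 1) := by
  refine (norm_cpow_taylor_remainder_le (hσ.trans hs) (by positivity)).trans ?_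
  gcongr
  linarith

lemma summable_nat_add_one_rpow {σ : ℝ} (hσ : 0 < σ) :
    Summable fun n : ℕ => (n + 1 : ℝ) ^ (-σ - 1) := by
  simpa using (summable_nat_add_iff 1).mpr (Real.summable_nat_rpow.mpr (by linarith : -σ - 1 < -1))

lemma summable_zetaTerm {s : ℂ} (hs : 0 < s.re) : Summable fun n => zetaTerm n s :=
  .of_norm_bounded ((summable_nat_add_one_rpow hs).mul_left _)
    (norm_zetaTerm_le (by linarith) le_rfl)

lemma differentiable_zetaTerm (n : ℕ) : Differentiable ℂ (zetaTerm n) := by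
  intro s
  have h₁ : ((n + 1 : ℝ) : ℂ) ≠ 0 := ofReal_ne_zero.mpr (by positivity)
  have h₂ : ((n + 1 + 1 : ℝ) : ℂ) ≠ 0 := ofReal_ne_zero.mpr (by positivity)
  unfold zetaTerm
  exact ((DifferentiableAt.const_cpow (by fun_prop) (Or.inl h₂)).sub
    (DifferentiableAt.const_cpow (by fun_prop) (Or.inl h₁))).sub
    ((by fun_prop : DifferentiableAt ℂ (fun z : ℂ => 1 - z) s).mul
      (DifferentiableAt.const_cpow (by fun_prop) (Or.inl h₁)))

lemma hasSum_cpow_one_sub_differences {s : ℂ} (hs : 1 < s.re)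
    (hsum : Summable fun n : ℕ =>
      ((n + 1 + 1 : ℝ) : ℂ) ^ (1 - s) - ((n + 1 : ℝ) : ℂ) ^ (1 - s)) :
    HasSum (fun n : ℕ => ((n + 1 + 1 : ℝ) : ℂ) ^ (1 - s) - ((n + 1 : ℝ) : ℂ) ^ (1 - s)) (-1) := by
  have htelescope (N : ℕ) : ∑ n ∈ Finset.range N,
      (((n + 1 + 1 : ℝ) : ℂ) ^ (1 - s) - ((n + 1 : ℝ) : ℂ) ^ (1 - s)) =
        ((N + 1 : ℝ) : ℂ) ^ (1 - s) - 1 := by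
    simpa using Finset.sum_range_sub (fun n : ℕ => ((n + 1 : ℝ) : ℂ) ^ (1 - s)) N
  have hnorm (N : ℕ) : ‖((N + 1 : ℝ) : ℂ) ^ (1 - s)‖ = ((N + 1 : ℕ) : ℝ) ^ (-(s.re - 1)) := by
    rw [norm_cpow_eq_rpow_re_of_pos (by positivity)]
    simp
  have hlim : Tendsto (fun N : ℕ => ((N + 1 : ℝ) : ℂ) ^ (1 - s)) atTop (𝓝 0) := by
    rw [tendsto_zero_iff_norm_tendsto_zero]
    simp_rw [hnorm]
    exact (tendsto_add_atTop_iff_nat 1).mpr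
      ((tendsto_rpow_neg_atTop (by linarith)).comp tendsto_natCast_atTop_atTop)
  rw [hsum.hasSum_iff_tendsto_nat]
  simp_rw [htelescope]
  simpa using hlim.sub_const 1

lemma hasSum_nat_add_one_cpow_neg {s : ℂ} (hs : 1 < s.re) :
    HasSum (fun n : ℕ => ((n + 1 : ℝ) : ℂ) ^ (-s)) (riemannZeta s) := by
  rw [zeta_eq_tsum_one_div_nat_add_one_cpow hs]
  have hsum := ((summable_nat_add_iff 1).mpr (summable_one_div_nat_cpow.mpr hs)).hasSum
  simpa only [Nat.cast_add, Nat.cast_one, one_div, ← cpow_neg, ofReal_add, ofReal_natCast,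
    ofReal_one] using hsum

lemma one_add_tsum_zetaTerm_of_one_lt_re {s : ℂ} (hs : 1 < s.re) :
    1 + ∑' n, zetaTerm n s = riemannZeta₁ s := by
  have hs1 : s ≠ 1 := by rintro rfl; simp at hs
  have hzeta := (hasSum_nat_add_one_cpow_neg hs).mul_left (1 - s)
  have hdiff := hasSum_cpow_one_sub_differences hs
    (((summable_zetaTerm (by linarith)).add hzeta.summable).congr fun n => by simp [zetaTerm])
  have hterm : HasSum (fun n => zetaTerm n s) (-1 - (1 - s) * riemannZeta s) := hdiff.sub hzeta
  have : s - 1 ≠ 0 := sub_ne_zero.mpr hs1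
  rw [hterm.tsum_eq, riemannZeta_eq_inv_sub_mul hs1]
  field_simp
  ring

lemma differentiableOn_tsum_zetaTerm :
    DifferentiableOn ℂ (fun s => ∑' n, zetaTerm n s) {s | 0 < s.re} := by
  intro s hs
  set U : Set ℂ := {z | s.re / 2 < z.re} ∩ ball 0 (‖s‖ + 1)
  have hUo : IsOpen U := (isOpen_lt continuous_const continuous_re).inter isOpen_ball
  have hre : 0 < s.re := hs
  have hsU : s ∈ U := ⟨by simpa using hre, by simp⟩
  refine ((differentiableOn_tsum_of_summable_norm (u := fun n : ℕ =>
    (‖s‖ + 1 + 1) * (‖s‖ + 1) * (n + 1 : ℝ) ^ (-(s.re / 2) - 1))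
    ((summable_nat_add_one_rpow (by linarith)).mul_left _)
    (fun n => (differentiable_zetaTerm n).differentiableOn) hUo ?_).differentiableAt
    (hUo.mem_nhds hsU)).differentiableWithinAt
  intro n w hw
  have hwnorm : ‖w‖ ≤ ‖s‖ + 1 := (mem_ball_zero_iff.mp hw.2).le
  have hwnorm' : ‖w - 1‖ ≤ ‖s‖ + 1 + 1 := (norm_sub_le _ _).trans (by simpa using hwnorm)
  refine (norm_zetaTerm_le (by linarith) hw.1.le n).trans ?_
  gcongr

lemma one_add_tsum_zetaTerm {s : ℂ} (hs : 0 < s.re) :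
    1 + ∑' n, zetaTerm n s = riemannZeta₁ s := by
  have hopen (a : ℝ) : IsOpen {z : ℂ | a < z.re} := isOpen_lt continuous_const continuous_re
  have hnear : (fun z => 1 + ∑' n, zetaTerm n z) =ᶠ[𝓝 2] riemannZeta₁ := by
    filter_upwards [(hopen 1).mem_nhds (by simp : (1 : ℝ) < (2 : ℂ).re)] with z hz
    exact one_add_tsum_zetaTerm_of_one_lt_re hz
  exact AnalyticOnNhd.eqOn_of_preconnected_of_eventuallyEq
    ((differentiableOn_tsum_zetaTerm.const_add 1).analyticOnNhd (hopen 0))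
    (differentiable_riemannZeta₁.differentiableOn.analyticOnNhd (hopen 0))
    (convex_halfSpace_re_gt 0).isPreconnected (by simp : (0 : ℝ) < (2 : ℂ).re) hnear hs

lemma exists_norm_riemannZeta₁_le {σ : ℝ} (hσ : 0 < σ) :
    ∃ A : ℝ, 0 < A ∧ ∀ s : ℂ, σ ≤ s.re → ‖riemannZeta₁ s‖ ≤ 1 + A * (‖s - 1‖ * ‖s‖) := by
  have hsum := summable_nat_add_one_rpow hσ
  refine ⟨∑' n : ℕ, (n + 1 : ℝ) ^ (-σ - 1), hsum.tsum_pos (fun n => by positivity) 0 (by simp), ?_⟩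
  intro s hs
  rw [← one_add_tsum_zetaTerm (hσ.trans_le hs), mul_comm, ← hsum.tsum_mul_left]
  refine (norm_add_le _ _).trans ?_
  rw [norm_one]
  gcongr
  exact tsum_of_norm_bounded (hsum.mul_left _).hasSum (norm_zetaTerm_le (by linarith) hs)

end ZetaGrowth

/-! ### Landau's bounds for logarithmic derivatives -/

section LogDeriv

open Complex Metric

variable {f : ℂ → ℂ} {c ρ : ℂ} {r R M : ℝ}

lemma exists_eq_mul_exp_on_ball (hr : 0 < r) (hf : DifferentiableOn ℂ f (ball c r))
    (hne : ∀ z ∈ ball c r, f z ≠ 0) :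
    ∃ g : ℂ → ℂ, g c = 0 ∧ (∀ z ∈ ball c r, HasDerivAt g (logDeriv f z) z) ∧
      ∀ z ∈ ball c r, f z = f c * exp (g z) := by
  obtain ⟨g, hgc, hg⟩ := (show DifferentiableOn ℂ (logDeriv f) (ball c r) from
    (hf.deriv isOpen_ball).div hf hne).isExactOn_ball.with_val_at c 0
  have hlog : Set.EqOn (logDeriv f) (logDeriv fun z => exp (g z)) (ball c r) := by
    intro z hz
    rw [logDeriv_apply (fun z => exp (g z)), (hg z hz).cexp.deriv,
      mul_div_cancel_left₀ _ (exp_ne_zero _)]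
  obtain ⟨a, -, ha⟩ := (logDeriv_eqOn_iff hf
    (fun z hz => (hg z hz).cexp.differentiableAt.differentiableWithinAt) isOpen_ball
    (convex_ball c r).isPreconnected (fun z _ => exp_ne_zero _) hne).mp hlog
  have hfa : ∀ z ∈ ball c r, f z = a * exp (g z) := fun z hz => ha hz
  have hac : f c = a := by simpa [hgc] using hfa c (mem_ball_self hr)
  exact ⟨g, hgc, hg, fun z hz => hac ▸ hfa z hz⟩

lemma norm_le_six_mul_of_re_le {g : ℂ → ℂ} (hr : 0 < r) (hM : 0 < M)
    (hg : DifferentiableOn ℂ g (ball c r)) (hgc : g c = 0) (hre : ∀ z ∈ ball c r, (g z).re ≤ M)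
    {z : ℂ} (hz : z ∈ closedBall c (3 * r / 4)) : ‖g z‖ ≤ 6 * M := by
  have hmaps : Set.MapsTo (· + c) (ball 0 r) (ball c r) := fun u hu => by simpa using hu
  have hzc : ‖z - c‖ ≤ 3 * r / 4 := by rwa [mem_closedBall, dist_eq_norm] at hz
  have h := borelCaratheodory_zero (f := fun u => g (u + c)) (z := z - c) hM
    (hg.comp (by fun_prop) hmaps) (fun u hu => hre _ (hmaps hu)) hr
    (by rw [mem_ball_zero_iff]; linarith) (by simpa using hgc)
  rw [sub_add_cancel] at h
  refine h.trans ?_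
  rw [div_le_iff₀ (by linarith)]
  nlinarith

lemma norm_logDeriv_le_of_ne_zero (hr : 0 < r) (hM : 0 < M)
    (hf : DifferentiableOn ℂ f (ball c r)) (hne : ∀ z ∈ ball c r, f z ≠ 0)
    (hbound : ∀ z ∈ ball c r, ‖f z‖ ≤ Real.exp M * ‖f c‖) {z : ℂ}
    (hz : z ∈ closedBall c (r / 2)) : ‖logDeriv f z‖ ≤ 24 * M / r := by
  obtain ⟨g, hgc, hg, hfg⟩ := exists_eq_mul_exp_on_ball hr hf hne
  have hgd : DifferentiableOn ℂ g (ball c r) := fun w hw =>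
    (hg w hw).differentiableAt.differentiableWithinAt
  have hre : ∀ w ∈ ball c r, (g w).re ≤ M := by
    intro w hw
    have h := hbound w hw
    rw [hfg w hw, norm_mul, norm_exp, mul_comm] at h
    exact Real.exp_le_exp.mp
      (le_of_mul_le_mul_right h (norm_pos_iff.mpr (hne c (mem_ball_self hr))))
  have hsub : closedBall z (r / 4) ⊆ closedBall c (3 * r / 4) :=
    closedBall_subset_closedBall' (by linarith [mem_closedBall.mp hz])
  have hsub' : closedBall c (3 * r / 4) ⊆ ball c r := closedBall_subset_ball (by linarith)
  have hcauchy := norm_deriv_le_of_forall_mem_sphere_norm_le (f := g) (c := z) (R := r / 4)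
    (C := 6 * M) (by linarith)
    ((hgd.mono (hsub.trans hsub')).diffContOnCl_ball subset_rfl)
    fun w hw => norm_le_six_mul_of_re_le hr hM hgd hgc hre (hsub (sphere_subset_closedBall hw))
  rw [(hg z (hsub' (hsub (mem_closedBall_self (by linarith))))).deriv] at hcauchy
  exact hcauchy.trans_eq (by field_simp; norm_num)

lemma eq_sub_mul_dslope (hρ : f ρ = 0) (z : ℂ) : f z = (z - ρ) * dslope f ρ z := by
  have h := sub_smul_dslope f ρ z
  rwa [hρ, sub_zero, smul_eq_mul, eq_comm] at h

lemma diffContOnCl_dslope {s : Set ℂ} (hs : s ∈ nhds ρ) (hf : DiffContOnCl ℂ f s) :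
    DiffContOnCl ℂ (dslope f ρ) s :=
  ⟨(differentiableOn_dslope hs).mpr hf.differentiableOn,
    (continuousOn_dslope (Filter.mem_of_superset hs subset_closure)).mpr
      ⟨hf.continuousOn, hf.differentiableOn.differentiableAt hs⟩⟩

lemma logDeriv_eq_add_logDeriv_dslope {s : Set ℂ} (hs : s ∈ nhds c) (hρs : s ∈ nhds ρ)
    (hf : DifferentiableOn ℂ f s) (hρ : f ρ = 0) (hfc : f c ≠ 0) :
    logDeriv f c = 1 / (c - ρ) + logDeriv (dslope f ρ) c := by
  have hfac := eq_sub_mul_dslope hρ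
  have hmul : (c - ρ) * dslope f ρ c ≠ 0 := hfac c ▸ hfc
  have hdslope := ((differentiableOn_dslope hρs).mpr hf).differentiableAt hs
  have h := logDeriv_mul (f := fun z => z - ρ) c (left_ne_zero_of_mul hmul)
    (right_ne_zero_of_mul hmul) (by fun_prop) hdslope
  rw [show (fun z => (z - ρ) * dslope f ρ z) = f from funext fun z => (hfac z).symm,
    logDeriv_apply (fun z => z - ρ)] at h
  simpa using h

/-- Dividing out a zero in the quarter disc gains a factor `e`: on the boundary circle the removed
factor has modulus at least `3 R / 4`, at the centre at most `R / 4`, and `e ≤ 3`. -/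
lemma norm_dslope_le_of_zero (hR : 0 < R) (hf : DiffContOnCl ℂ f (ball c R)) (hρ : f ρ = 0)
    (hρR : ρ ∈ closedBall c (R / 4))
    (hbound : ∀ z ∈ closedBall c R, ‖f z‖ ≤ Real.exp M * ‖f c‖) {z : ℂ}
    (hz : z ∈ closedBall c R) : ‖dslope f ρ z‖ ≤ Real.exp (M - 1) * ‖dslope f ρ c‖ := by
  have hρball : ball c R ∈ nhds ρ :=
    isOpen_ball.mem_nhds (closedBall_subset_ball (by linarith) hρR)
  have hρc : ‖c - ρ‖ ≤ R / 4 := by rwa [← dist_eq_norm, ← mem_closedBall']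
  refine norm_le_of_forall_mem_frontier_norm_le isBounded_ball (diffContOnCl_dslope hρball hf) ?_
    (by rwa [closure_ball c hR.ne'])
  intro w hw
  rw [frontier_ball c hR.ne', mem_sphere, dist_eq_norm] at hw
  have hwρ : 3 * R / 4 ≤ ‖w - ρ‖ := by
    have := norm_sub_le_norm_sub_add_norm_sub w ρ c
    rw [norm_sub_rev ρ c] at this
    linarith
  have hexp : Real.exp M ≤ 3 * Real.exp (M - 1) := by
    rw [show M = 1 + (M - 1) by ring, Real.exp_add, add_sub_cancel_left]
    gcongr
    linarith [Real.exp_one_lt_d9]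
  have h := hbound w (by rw [mem_closedBall, dist_eq_norm]; exact hw.le)
  rw [eq_sub_mul_dslope hρ w, eq_sub_mul_dslope hρ c, norm_mul, norm_mul] at h
  have hscaled : 3 * R / 4 * ‖dslope f ρ w‖ ≤
      3 * R / 4 * (Real.exp (M - 1) * ‖dslope f ρ c‖) :=
    calc 3 * R / 4 * ‖dslope f ρ w‖ ≤ ‖w - ρ‖ * ‖dslope f ρ w‖ := by gcongr
      _ ≤ 3 * Real.exp (M - 1) * (R / 4 * ‖dslope f ρ c‖) := h.trans (by gcongr)
      _ = 3 * R / 4 * (Real.exp (M - 1) * ‖dslope f ρ c‖) := by ring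
  exact le_of_mul_le_mul_left hscaled (by linarith)

lemma nonneg_of_norm_le_exp_mul (hR : 0 ≤ R) (hfc : f c ≠ 0)
    (hbound : ∀ z ∈ closedBall c R, ‖f z‖ ≤ Real.exp M * ‖f c‖) : 0 ≤ M :=
  Real.one_le_exp_iff.mp
    ((le_mul_iff_one_le_left (norm_pos_iff.mpr hfc)).mp (hbound c (mem_closedBall_self hR)))

lemma one_div_re_nonneg {z : ℂ} (hz : 0 ≤ z.re) : 0 ≤ (1 / z).re := by
  rw [one_div, inv_re]
  exact div_nonneg hz (normSq_nonneg z)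

lemma neg_le_re_logDeriv_of_ne_zero (hR : 0 < R) (hf : DiffContOnCl ℂ f (ball c R))
    (hbound : ∀ z ∈ closedBall c R, ‖f z‖ ≤ Real.exp M * ‖f c‖)
    (hne : ∀ z ∈ closedBall c (R / 4), f z ≠ 0) :
    -(96 * (M + 1) / R) ≤ (logDeriv f c).re := by
  have hfc := hne c (mem_closedBall_self (by linarith))
  have hM := nonneg_of_norm_le_exp_mul hR.le hfc hbound
  have hsub : ball c (R / 4) ⊆ ball c R := ball_subset_ball (by linarith)
  have h := norm_logDeriv_le_of_ne_zero (z := c) (by linarith : 0 < R / 4)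
    (by linarith : 0 < M + 1) (hf.differentiableOn.mono hsub)
    (fun z hz => hne z (ball_subset_closedBall hz))
    (fun z hz => (hbound z (ball_subset_closedBall (hsub hz))).trans (by gcongr; linarith))
    (mem_closedBall_self (by linarith))
  have hradius : 24 * (M + 1) / (R / 4) = 96 * (M + 1) / R := by field_simp; norm_num
  linarith [neg_abs_le (logDeriv f c).re, abs_re_le_norm (logDeriv f c)]

/-- Induction on an integer above `M`: dividing out a zero lowers `M` by one, and the contribution
`1 / (c - ρ)` of the zero to the logarithmic derivative has nonnegative real part. -/
lemma neg_le_re_logDeriv (hR : 0 < R) (hf : DiffContOnCl ℂ f (ball c R)) (hfc : f c ≠ 0)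
    (hbound : ∀ z ∈ closedBall c R, ‖f z‖ ≤ Real.exp M * ‖f c‖)
    (hzeros : ∀ z ∈ closedBall c (R / 4), f z = 0 → z.re ≤ c.re) :
    -(96 * (M + 1) / R) ≤ (logDeriv f c).re := by
  obtain ⟨n, hn⟩ := exists_nat_gt M
  induction n generalizing f M with
  | zero => exact absurd (nonneg_of_norm_le_exp_mul hR.le hfc hbound) (by simpa using hn)
  | succ n ih =>
    by_cases hex : ∃ ρ ∈ closedBall c (R / 4), f ρ = 0
    · obtain ⟨ρ, hρR, hρ⟩ := hex
      have hρball : ball c R ∈ nhds ρ :=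
        isOpen_ball.mem_nhds (closedBall_subset_ball (by linarith) hρR)
      have hfac := eq_sub_mul_dslope hρ
      have hrest := ih (M := M - 1) (diffContOnCl_dslope hρball hf)
        (right_ne_zero_of_mul (hfac c ▸ hfc))
        (fun z hz => norm_dslope_le_of_zero hR hf hρ hρR hbound hz)
        (fun z hz hz0 => hzeros z hz (by rw [hfac, hz0, mul_zero]))
        (by push_cast at hn; linarith)
      have hpole := one_div_re_nonneg (z := c - ρ) (by simpa using hzeros ρ hρR hρ)
      have hmono : 96 * (M - 1 + 1) / R ≤ 96 * (M + 1) / R := by gcongr; linarith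
      rw [logDeriv_eq_add_logDeriv_dslope (ball_mem_nhds c hR) hρball hf.differentiableOn hρ hfc,
        add_re]
      linarith
    · exact neg_le_re_logDeriv_of_ne_zero hR hf hbound fun z hz hz0 => hex ⟨z, hz, hz0⟩

lemma one_div_sub_le_re_logDeriv (hR : 0 < R) (hf : DiffContOnCl ℂ f (ball c R)) (hfc : f c ≠ 0)
    (hbound : ∀ z ∈ closedBall c R, ‖f z‖ ≤ Real.exp M * ‖f c‖)
    (hzeros : ∀ z ∈ closedBall c (R / 4), f z = 0 → z.re ≤ c.re)
    (hρR : ρ ∈ closedBall c (R / 4)) (hρ : f ρ = 0) :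
    (1 / (c - ρ)).re - 96 * M / R ≤ (logDeriv f c).re := by
  have hρball : ball c R ∈ nhds ρ :=
    isOpen_ball.mem_nhds (closedBall_subset_ball (by linarith) hρR)
  have hfac := eq_sub_mul_dslope hρ
  have hrest := neg_le_re_logDeriv (M := M - 1) hR (diffContOnCl_dslope hρball hf)
    (right_ne_zero_of_mul (hfac c ▸ hfc))
    (fun z hz => norm_dslope_le_of_zero hR hf hρ hρR hbound hz)
    (fun z hz hz0 => hzeros z hz (by rw [hfac, hz0, mul_zero]))
  rw [sub_add_cancel] at hrest
  rw [logDeriv_eq_add_logDeriv_dslope (ball_mem_nhds c hR) hρball hf.differentiableOn hρ hfc,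
    add_re]
  linarith

end LogDeriv

/-! ### Size and zeros of `(s - 1) ζ(s)` -/

/-- The logarithmic size `log (|t| + 3)` of the height `t`, in terms of which bounds for `ζ(σ + it)`
are expressed; the shift by `3` makes it at least `1`. -/
noncomputable def logHeight (t : ℝ) : ℝ := Real.log (|t| + 3)

section ZetaSize

open Complex Metric

lemma one_le_logHeight (t : ℝ) : 1 ≤ logHeight t := by
  rw [logHeight, Real.le_log_iff_exp_le (by positivity)]
  linarith [Real.exp_one_lt_d9, abs_nonneg t]

lemma logHeight_le_of_abs_le {t u : ℝ} (h : |t| ≤ |u|) : logHeight t ≤ logHeight u :=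
  Real.log_le_log (by positivity) (by gcongr)

lemma logHeight_le_two_mul {t u : ℝ} (h : |u| ≤ 2 * |t| + 1) : logHeight u ≤ 2 * logHeight t := by
  have hsq : 2 * logHeight t = Real.log ((|t| + 3) ^ 2) := by
    rw [Real.log_pow]
    norm_num [logHeight]
  rw [hsq, logHeight]
  exact Real.log_le_log (by positivity) (by nlinarith [abs_nonneg t])

lemma exp_two_mul_logHeight (t : ℝ) : Real.exp (2 * logHeight t) = (|t| + 3) ^ 2 := by
  rw [two_mul, Real.exp_add, logHeight, Real.exp_log (by positivity), sq]

lemma riemannZeta₁_eq_mul {s : ℂ} (hs : s ≠ 1) : riemannZeta₁ s = (s - 1) * riemannZeta s := by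
  rw [riemannZeta_eq_inv_sub_mul hs, mul_inv_cancel_left₀ (sub_ne_zero.mpr hs)]

lemma riemannZeta₁_ne_zero_of_one_le_re {s : ℂ} (hs : 1 ≤ s.re) : riemannZeta₁ s ≠ 0 := by
  rcases eq_or_ne s 1 with rfl | hs1
  · simp
  · rw [riemannZeta₁_eq_mul hs1]
    exact mul_ne_zero (sub_ne_zero.mpr hs1) (riemannZeta_ne_zero_of_one_le_re hs)

lemma exists_norm_riemannZeta₁_le_exp {a : ℝ} (ha : 0 < a) (b : ℝ) :
    ∃ A : ℝ, 0 < A ∧ ∀ s : ℂ, a ≤ s.re → s.re ≤ b →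
      ‖riemannZeta₁ s‖ ≤ Real.exp (A * logHeight s.im) := by
  obtain ⟨A, hA, hgrowth⟩ := exists_norm_riemannZeta₁_le ha
  have hlog : 0 ≤ Real.log (1 + A * (b + 1) ^ 2) :=
    Real.log_nonneg (le_add_of_nonneg_right (by positivity))
  refine ⟨Real.log (1 + A * (b + 1) ^ 2) + 2, by linarith, fun s hsa hsb => ?_⟩
  have him := abs_nonneg s.im
  have hnorm : ‖s‖ ≤ (b + 1) * (|s.im| + 3) := by
    have := norm_le_abs_re_add_abs_im s
    rw [abs_of_pos (ha.trans_le hsa)] at this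
    nlinarith
  have hnorm' : ‖s - 1‖ ≤ (b + 1) * (|s.im| + 3) := by
    have hre : |s.re - 1| ≤ b + 1 := abs_le.mpr ⟨by linarith, by linarith⟩
    have := norm_le_abs_re_add_abs_im (s - 1)
    simp only [sub_re, one_re, sub_im, one_im, sub_zero] at this
    nlinarith
  calc ‖riemannZeta₁ s‖ ≤ 1 + A * (‖s - 1‖ * ‖s‖) := hgrowth s hsa
    _ ≤ 1 + A * ((b + 1) * (|s.im| + 3) * ((b + 1) * (|s.im| + 3))) := by
        gcongr
        exact (norm_nonneg _).trans hnorm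
    _ ≤ (1 + A * (b + 1) ^ 2) * (|s.im| + 3) ^ 2 := by nlinarith
    _ = Real.exp (Real.log (1 + A * (b + 1) ^ 2) * 1 + 2 * logHeight s.im) := by
        rw [Real.exp_add, mul_one, Real.exp_log (by positivity), exp_two_mul_logHeight]
    _ ≤ Real.exp ((Real.log (1 + A * (b + 1) ^ 2) + 2) * logHeight s.im) := by
        rw [add_mul]
        gcongr
        exact one_le_logHeight _

lemma riemannZeta_ofReal_eq_tsum {σ : ℝ} (hσ : 1 < σ) :
    riemannZeta σ = ((∑' n : ℕ, 1 / (n : ℝ) ^ σ : ℝ) : ℂ) := by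
  rw [zeta_eq_tsum_one_div_nat_cpow (by simpa using hσ), ofReal_tsum]
  congr 1 with n
  rw [ofReal_div, ofReal_one, ofReal_cpow n.cast_nonneg, ofReal_natCast]

/-- `1 / ζ(s)` is the Dirichlet series of the Möbius function, which is dominated by `ζ(re s)`. -/
lemma one_le_norm_riemannZeta_mul {s : ℂ} (hs : 1 < s.re) :
    1 ≤ ‖riemannZeta s‖ * ‖riemannZeta s.re‖ := by
  have hmoebius := congrArg norm (ArithmeticFunction.LSeries_zeta_mul_Lseries_moebius hs)
  rw [ArithmeticFunction.LSeries_zeta_eq_riemannZeta hs, norm_mul, norm_one] at hmoebius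
  rw [← hmoebius]
  gcongr
  rw [riemannZeta_ofReal_eq_tsum hs, norm_real,
    Real.norm_of_nonneg (tsum_nonneg fun n => by positivity)]
  refine tsum_of_norm_bounded (Real.summable_one_div_nat_rpow.mpr hs).hasSum fun n => ?_
  rcases n.eq_zero_or_pos with rfl | hn
  · rw [LSeries.term_zero, norm_zero]
    positivity
  · rw [LSeries.term_of_ne_zero hn.ne', norm_div, norm_natCast_cpow_of_pos hn, norm_intCast]
    gcongr
    exact_mod_cast ArithmeticFunction.abs_moebius_le_one

lemma exists_sq_le_mul_norm_riemannZeta₁ :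
    ∃ C : ℝ, 1 ≤ C ∧ ∀ s : ℂ, 1 < s.re → s.re ≤ 2 → (s.re - 1) ^ 2 ≤ C * ‖riemannZeta₁ s‖ := by
  obtain ⟨A, hA, hupper⟩ := exists_norm_riemannZeta₁_le_exp one_pos 2
  have hLH := one_le_logHeight 0
  refine ⟨Real.exp (A * logHeight 0), Real.one_le_exp (by positivity), fun s hs hs2 => ?_⟩
  have hs1 : s ≠ 1 := by rintro rfl; simp at hs
  have hre1 : (s.re : ℂ) ≠ 1 := by exact_mod_cast hs.ne'
  have hreal : (s.re - 1) * ‖riemannZeta s.re‖ ≤ Real.exp (A * logHeight 0) := by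
    have h := hupper s.re (by simpa using hs.le) (by simpa using hs2)
    rwa [riemannZeta₁_eq_mul hre1, norm_mul, ← ofReal_one, ← ofReal_sub, norm_real,
      Real.norm_of_nonneg (by linarith), ofReal_im] at h
  have hdist : s.re - 1 ≤ ‖s - 1‖ := by simpa using (le_abs_self _).trans (abs_re_le_norm (s - 1))
  rw [riemannZeta₁_eq_mul hs1, norm_mul]
  calc (s.re - 1) ^ 2 ≤ (s.re - 1) ^ 2 * (‖riemannZeta s‖ * ‖riemannZeta s.re‖) :=
        le_mul_of_one_le_right (sq_nonneg _) (one_le_norm_riemannZeta_mul hs)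
    _ = (s.re - 1) * ‖riemannZeta s.re‖ * ((s.re - 1) * ‖riemannZeta s‖) := by ring
    _ ≤ Real.exp (A * logHeight 0) * (‖s - 1‖ * ‖riemannZeta s‖) := by
        gcongr

lemma exists_norm_riemannZeta₁_le_exp_mul :
    ∃ A : ℝ, 0 < A ∧ ∀ s : ℂ, 1 < s.re → s.re ≤ 2 → ∀ z ∈ closedBall s (1 / 2),
      ‖riemannZeta₁ z‖ ≤
        Real.exp (A * (logHeight s.im - Real.log (s.re - 1))) * ‖riemannZeta₁ s‖ := by
  obtain ⟨A, hA, hupper⟩ := exists_norm_riemannZeta₁_le_exp (by norm_num : (0 : ℝ) < 1 / 2) (5 / 2)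
  obtain ⟨C, hC, hlower⟩ := exists_sq_le_mul_norm_riemannZeta₁
  have hlogC := Real.log_nonneg hC
  refine ⟨2 * A + Real.log C + 2, by linarith, fun s hs hs2 z hz => ?_⟩
  have hzs : ‖z - s‖ ≤ 1 / 2 := by rwa [mem_closedBall, dist_eq_norm] at hz
  have hre := abs_le.mp ((abs_re_le_norm (z - s)).trans hzs)
  have him := (abs_im_le_norm (z - s)).trans hzs
  rw [sub_re] at hre
  rw [sub_im] at him
  have hheight : logHeight z.im ≤ 2 * logHeight s.im := logHeight_le_two_mul <| by
    linarith [abs_sub_abs_le_abs_sub z.im s.im, abs_nonneg s.im]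
  have hη : 0 < s.re - 1 := by linarith
  have hlog : Real.log (s.re - 1) ≤ 0 := Real.log_nonpos hη.le (by linarith)
  have hLH := one_le_logHeight s.im
  have hcentre : Real.exp (2 * Real.log (s.re - 1) - Real.log C) ≤ ‖riemannZeta₁ s‖ := by
    rw [Real.exp_sub, Real.exp_log (by linarith), two_mul, Real.exp_add, Real.exp_log hη,
      div_le_iff₀' (by linarith), ← sq]
    exact hlower s hs hs2
  calc ‖riemannZeta₁ z‖ ≤ Real.exp (A * logHeight z.im) :=
        hupper z (by linarith) (by linarith)
    _ ≤ Real.exp ((2 * A + Real.log C + 2) * (logHeight s.im - Real.log (s.re - 1)) +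
          (2 * Real.log (s.re - 1) - Real.log C)) := by
        gcongr
        nlinarith [mul_nonneg hlogC (sub_nonneg.mpr hLH), mul_nonneg hlogC (neg_nonneg.mpr hlog),
          mul_nonneg hA.le (neg_nonneg.mpr hlog), mul_le_mul_of_nonneg_left hheight hA.le]
    _ ≤ _ := by
        rw [Real.exp_add]
        gcongr

lemma exists_le_re_logDeriv_riemannZeta₁ :
    ∃ A : ℝ, 0 < A ∧ ∀ s : ℂ, 1 < s.re → s.re ≤ 2 →
      -(A * (logHeight s.im - Real.log (s.re - 1))) ≤ (logDeriv riemannZeta₁ s).re ∧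
      ∀ ρ ∈ closedBall s (1 / 8), riemannZeta₁ ρ = 0 →
        (1 / (s - ρ)).re - A * (logHeight s.im - Real.log (s.re - 1)) ≤
          (logDeriv riemannZeta₁ s).re := by
  obtain ⟨A, hA, hdisc⟩ := exists_norm_riemannZeta₁_le_exp_mul
  refine ⟨192 * (A + 1), by linarith, fun s hs hs2 => ?_⟩
  have hLH := one_le_logHeight s.im
  have hlog : Real.log (s.re - 1) ≤ 0 := Real.log_nonpos (by linarith) (by linarith)
  have hne := riemannZeta₁_ne_zero_of_one_le_re hs.le
  have hright : ∀ z ∈ closedBall s (1 / 2 / 4), riemannZeta₁ z = 0 → z.re ≤ s.re := by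
    intro z _ hz
    by_contra! hsz
    exact riemannZeta₁_ne_zero_of_one_le_re (hs.trans hsz).le hz
  have hhalf : (0 : ℝ) < 1 / 2 := by norm_num
  have hf : DiffContOnCl ℂ riemannZeta₁ (ball s (1 / 2)) := differentiable_riemannZeta₁.diffContOnCl
  constructor
  · have h := neg_le_re_logDeriv hhalf hf hne (hdisc s hs hs2) hright
    nlinarith
  · intro ρ hρ hρ0
    have h := one_div_sub_le_re_logDeriv hhalf hf hne (hdisc s hs hs2) hright
      (closedBall_subset_closedBall (by norm_num) hρ) hρ0
    nlinarith

end ZetaSize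

/-! ### The zero-free region -/

section ZeroFree

open Complex Metric
open scoped LSeries.notation ArithmeticFunction.vonMangoldt

lemma LSeries_vonMangoldt_eq_sub_logDeriv {s : ℂ} (hs : 1 < s.re) :
    LSeries ↗Λ s = 1 / (s - 1) - logDeriv riemannZeta₁ s := by
  have hs1 : s ≠ 1 := by rintro rfl; simp at hs
  have hs1' : s - 1 ≠ 0 := sub_ne_zero.mpr hs1
  have hzeta : riemannZeta s ≠ 0 := riemannZeta_ne_zero_of_one_le_re hs.le
  have hlocal : riemannZeta₁ =ᶠ[nhds s] fun z => (z - 1) * riemannZeta z := by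
    filter_upwards [isOpen_ne.mem_nhds hs1] with z hz using riemannZeta₁_eq_mul hz
  have hlog := logDeriv_mul (f := fun z => z - 1) s hs1' hzeta (by fun_prop)
    (differentiableAt_riemannZeta hs1)
  rw [(logDeriv_congr_nhds hlocal).eq_of_nhds, hlog, logDeriv_apply (fun z => z - 1),
    logDeriv_apply riemannZeta, ArithmeticFunction.LSeries_vonMangoldt_eq_deriv_riemannZeta_div hs]
  simp only [deriv_sub_const, deriv_id'']
  ring

lemma hasSum_vonMangoldt_mul_cpow {σ : ℝ} (hσ : 1 < σ) (t : ℝ) :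
    HasSum (fun n : ℕ => ((Λ n * (n : ℝ) ^ (-σ) : ℝ) : ℂ) * (n : ℂ) ^ (-(t * I)))
      (LSeries ↗Λ (σ + t * I)) := by
  refine (ArithmeticFunction.LSeriesSummable_vonMangoldt
    (by simpa using hσ)).LSeriesHasSum.congr_fun fun n => ?_
  rcases n.eq_zero_or_pos with rfl | hn
  · simp
  · rw [LSeries.term_of_ne_zero hn.ne', div_eq_mul_inv, ← cpow_neg, neg_add,
      cpow_add _ _ (Nat.cast_ne_zero.mpr hn.ne'), ofReal_mul, ofReal_cpow n.cast_nonneg,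
      ofReal_neg, ofReal_natCast, mul_assoc]

lemma hasSum_vonMangoldt_mul_rpow {σ : ℝ} (hσ : 1 < σ) :
    HasSum (fun n : ℕ => Λ n * (n : ℝ) ^ (-σ)) (LSeries ↗Λ σ).re := by
  simpa using hasSum_re (hasSum_vonMangoldt_mul_cpow hσ 0)

lemma vonMangoldt_mul_rpow_nonneg (n : ℕ) (σ : ℝ) : 0 ≤ Λ n * (n : ℝ) ^ (-σ) :=
  mul_nonneg ArithmeticFunction.vonMangoldt_nonneg (by positivity)

lemma norm_natCast_cpow_neg_mul_I {n : ℕ} (hn : 0 < n) (t : ℝ) : ‖(n : ℂ) ^ (-(t * I))‖ = 1 := by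
  rw [norm_natCast_cpow_of_pos hn]
  simp

lemma norm_LSeries_vonMangoldt_le {s : ℂ} (hs : 1 < s.re) :
    ‖LSeries ↗Λ s‖ ≤ ‖LSeries ↗Λ s.re‖ := by
  refine le_trans ?_ (re_le_norm _)
  conv_lhs => rw [← re_add_im s, ← (hasSum_vonMangoldt_mul_cpow hs s.im).tsum_eq]
  refine tsum_of_norm_bounded (hasSum_vonMangoldt_mul_rpow hs) fun n => ?_
  rcases n.eq_zero_or_pos with rfl | hn
  · simp
  · rw [norm_mul, norm_natCast_cpow_neg_mul_I hn, mul_one, norm_real,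
      Real.norm_of_nonneg (vonMangoldt_mul_rpow_nonneg n _)]

lemma three_add_four_mul_re_add_re_sq_nonneg {w : ℂ} (hw : ‖w‖ = 1) :
    0 ≤ 3 + 4 * w.re + (w ^ 2).re := by
  have hsq : w.re ^ 2 + w.im ^ 2 = 1 := by
    simpa [hw, normSq_apply, ← sq] using (Complex.sq_norm w).symm
  rw [sq, mul_re]
  nlinarith [sq_nonneg (1 + w.re)]

lemma LSeries_vonMangoldt_three_four_one {σ : ℝ} (hσ : 1 < σ) (t : ℝ) :
    0 ≤ 3 * (LSeries ↗Λ σ).re + 4 * (LSeries ↗Λ (σ + t * I)).re +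
      (LSeries ↗Λ (σ + (2 * t : ℝ) * I)).re := by
  refine ((((hasSum_vonMangoldt_mul_rpow hσ).mul_left 3).add
    ((hasSum_re (hasSum_vonMangoldt_mul_cpow hσ t)).mul_left 4)).add
    (hasSum_re (hasSum_vonMangoldt_mul_cpow hσ (2 * t)))).nonneg fun n => ?_
  rcases n.eq_zero_or_pos with rfl | hn
  · simp
  have hdouble : (n : ℂ) ^ (-((2 * t : ℝ) * I)) = ((n : ℂ) ^ (-(t * I))) ^ 2 := by
    rw [← cpow_nat_mul]
    congr 1
    push_cast
    ring
  rw [hdouble, re_ofReal_mul, re_ofReal_mul]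
  have h := mul_nonneg (vonMangoldt_mul_rpow_nonneg n σ)
    (three_add_four_mul_re_add_re_sq_nonneg (norm_natCast_cpow_neg_mul_I hn t))
  linarith

lemma re_one_div_le_one {z : ℂ} (hz : 1 ≤ |z.im|) : (1 / z).re ≤ 1 := by
  refine (re_le_norm _).trans ?_
  rw [norm_div, norm_one]
  exact div_le_one_of_le₀ (hz.trans (abs_im_le_norm z)) (norm_nonneg z)

lemma re_logDeriv_riemannZeta₁_three_four_one {σ t : ℝ} (hσ : 1 < σ) (ht : 1 ≤ |t|) :
    3 * (logDeriv riemannZeta₁ σ).re + 4 * (logDeriv riemannZeta₁ (σ + t * I)).re +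
      (logDeriv riemannZeta₁ (σ + (2 * t : ℝ) * I)).re ≤ 3 / (σ - 1) + 5 := by
  have h := LSeries_vonMangoldt_three_four_one hσ t
  have hpole : (1 / ((σ : ℂ) - 1)).re = 1 / (σ - 1) := by
    rw [← ofReal_one, ← ofReal_sub, ← ofReal_div, ofReal_re]
  have hheight : (1 / ((σ : ℂ) + t * I - 1)).re ≤ 1 := re_one_div_le_one (by simpa using ht)
  have hheight₂ : (1 / ((σ : ℂ) + (2 * t : ℝ) * I - 1)).re ≤ 1 :=
    re_one_div_le_one (by simp [abs_mul]; linarith)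
  simp only [LSeries_vonMangoldt_eq_sub_logDeriv, ofReal_re, add_re, re_ofReal_mul, I_re, mul_zero,
    add_zero, hσ, sub_re, hpole] at h
  linarith [show 3 * (1 / (σ - 1)) = 3 / (σ - 1) by ring]

lemma re_lt_one_of_riemannZeta₁_eq_zero {ρ : ℂ} (hρ : riemannZeta₁ ρ = 0) : ρ.re < 1 := by
  by_contra! h
  exact riemannZeta₁_ne_zero_of_one_le_re h hρ

lemma exists_four_div_le_of_riemannZeta₁_eq_zero :
    ∃ A : ℝ, 1 ≤ A ∧ ∀ ρ : ℂ, riemannZeta₁ ρ = 0 → 1 ≤ |ρ.im| → ∀ η : ℝ, 0 < η → η ≤ 1 →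
      1 + η - ρ.re ≤ 1 / 8 →
      4 / (1 + η - ρ.re) ≤ 3 / η + A * (logHeight ρ.im - Real.log η) := by
  obtain ⟨A, hA, hlower⟩ := exists_le_re_logDeriv_riemannZeta₁
  refine ⟨9 * A + 5, by linarith, fun ρ hρ him η hη hη1 hδ => ?_⟩
  have hρre := re_lt_one_of_riemannZeta₁_eq_zero hρ
  have hLH := one_le_logHeight ρ.im
  have hlog : Real.log η ≤ 0 := Real.log_nonpos hη.le hη1
  have hlower' (t : ℝ) := hlower ((1 + η : ℝ) + t * I) (by simpa using hη) (by simp; linarith)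
  simp only [add_re, ofReal_re, re_ofReal_mul, I_re, mul_zero, add_zero, add_im, ofReal_im,
    im_ofReal_mul, I_im, mul_one, zero_add, add_sub_cancel_left] at hlower'
  have hdiff : ((1 + η : ℝ) : ℂ) + ρ.im * I - ρ = ((1 + η - ρ.re : ℝ) : ℂ) := by
    apply Complex.ext <;> simp
  have hmem : ρ ∈ closedBall (((1 + η : ℝ) : ℂ) + ρ.im * I) (1 / 8) := by
    rw [mem_closedBall', dist_eq_norm, hdiff, norm_real, Real.norm_of_nonneg (by linarith)]
    exact hδ
  have hzero := (hlower' ρ.im).2 ρ hmem hρ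
  rw [hdiff, ← ofReal_one, ← ofReal_div, ofReal_re] at hzero
  have hreal := (hlower' 0).1
  rw [ofReal_zero, zero_mul, add_zero] at hreal
  have hdouble := (hlower' (2 * ρ.im)).1
  have h341 := re_logDeriv_riemannZeta₁_three_four_one (by linarith : 1 < 1 + η) him
  rw [add_sub_cancel_left] at h341
  have hheight₀ := mul_le_mul_of_nonneg_left
    (logHeight_le_of_abs_le (t := 0) (u := ρ.im) (by simp)) hA.le
  have hheight₂ := mul_le_mul_of_nonneg_left
    (logHeight_le_two_mul (t := ρ.im) (u := 2 * ρ.im) (by simp [abs_mul])) hA.le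
  have hAlog := mul_nonneg_of_nonpos_of_nonpos (neg_nonpos.mpr hA.le) hlog
  rw [show 4 / (1 + η - ρ.re) = 4 * (1 / (1 + η - ρ.re)) by ring]
  linarith

lemma mul_sub_log_le {A ℓ η : ℝ} (hA : 1 ≤ A) (hℓ : 1 ≤ ℓ) (hη : η = 1 / (256 * A ^ 2 * ℓ)) :
    A * (ℓ - Real.log η) ≤ 1 / 4 / η := by
  have hlog : -Real.log η ≤ 2 * (16 * A) + ℓ := by
    rw [hη, one_div, Real.log_inv, neg_neg, show 256 * A ^ 2 * ℓ = (16 * A) ^ 2 * ℓ by ring,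
      Real.log_mul (by positivity) (by positivity), Real.log_pow]
    have := Real.log_le_self (by linarith : 0 ≤ 16 * A)
    have := Real.log_le_self (by linarith : 0 ≤ ℓ)
    push_cast
    linarith
  have hAL : A ≤ A * ℓ := le_mul_of_one_le_right (by linarith) hℓ
  have hη' : 1 / 4 / η = 64 * (A * (A * ℓ)) := by
    rw [hη]
    field_simp
    norm_num
  calc A * (ℓ - Real.log η) ≤ A * (ℓ + (2 * (16 * A) + ℓ)) := by gcongr; linarith
    _ ≤ 1 / 4 / η := by rw [hη']; nlinarith

lemma exists_re_le_of_riemannZeta₁_eq_zero_of_one_le_abs_im :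
    ∃ b : ℝ, 0 < b ∧ ∀ ρ : ℂ, 1 ≤ |ρ.im| → riemannZeta₁ ρ = 0 →
      ρ.re ≤ 1 - b / logHeight ρ.im := by
  obtain ⟨A, hA, hineq⟩ := exists_four_div_le_of_riemannZeta₁_eq_zero
  refine ⟨3 / 13 / (256 * A ^ 2), by positivity, fun ρ him hρ => ?_⟩
  have hLH := one_le_logHeight ρ.im
  set η := 1 / (256 * A ^ 2 * logHeight ρ.im) with hη
  have hη0 : 0 < η := by positivity
  have hη1 : η ≤ 1 / 16 := one_div_le_one_div_of_le (by norm_num) (by nlinarith)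
  have hρre := re_lt_one_of_riemannZeta₁_eq_zero hρ
  have hb : 3 / 13 / (256 * A ^ 2) / logHeight ρ.im = 3 / 13 * η := by rw [hη]; field_simp
  rw [hb]
  rcases le_or_gt (1 + η - ρ.re) (1 / 8) with hδ | hδ
  · have h : 4 / (1 + η - ρ.re) ≤ 13 / 4 / η :=
      calc 4 / (1 + η - ρ.re) ≤ 3 / η + 1 / 4 / η :=
            (hineq ρ hρ him η hη0 (by linarith) hδ).trans
              (by gcongr; exact mul_sub_log_le hA hLH hη)
        _ = 13 / 4 / η := by ring
    rw [div_le_div_iff₀ (by linarith) hη0] at h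
    linarith
  · linarith

lemma exists_riemannZeta₁_ne_zero_of_abs_im_le (T : ℝ) :
    ∃ b : ℝ, 0 < b ∧ ∀ s : ℂ, |s.im| ≤ T → 1 - b < s.re → riemannZeta₁ s ≠ 0 := by
  have hK : IsCompact ((fun t : ℝ => (1 : ℂ) + t * I) '' Set.Icc (-T) T) :=
    isCompact_Icc.image (by fun_prop)
  obtain ⟨ε, hε, hsub⟩ := hK.exists_thickening_subset_open
    (isOpen_ne_fun differentiable_riemannZeta₁.continuous continuous_const)
    (Set.image_subset_iff.mpr fun t _ => riemannZeta₁_ne_zero_of_one_le_re (by simp))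
  refine ⟨ε, hε, fun s him hre => ?_⟩
  rcases le_or_gt 1 s.re with hs | hs
  · exact riemannZeta₁_ne_zero_of_one_le_re hs
  · refine hsub (mem_thickening_iff.mpr ⟨1 + s.im * I, ⟨s.im, abs_le.mp him, rfl⟩, ?_⟩)
    have hdiff : s - (1 + s.im * I) = ((s.re - 1 : ℝ) : ℂ) := by apply Complex.ext <;> simp
    rw [dist_eq_norm, hdiff, norm_real, Real.norm_eq_abs, abs_lt]
    constructor <;> linarith

theorem exists_riemannZeta₁_zeroFree :
    ∃ b : ℝ, 0 < b ∧ b ≤ 1 / 4 ∧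
      ∀ s : ℂ, 1 - b / logHeight s.im < s.re → riemannZeta₁ s ≠ 0 := by
  obtain ⟨b₁, hb₁, hlarge⟩ := exists_re_le_of_riemannZeta₁_eq_zero_of_one_le_abs_im
  obtain ⟨b₂, hb₂, hsmall⟩ := exists_riemannZeta₁_ne_zero_of_abs_im_le 1
  refine ⟨min (1 / 4) (min b₁ b₂), by positivity, min_le_left _ _, fun s hs hzero => ?_⟩
  have hLH := one_le_logHeight s.im
  rcases le_total |s.im| 1 with him | him
  · refine hsmall s him ?_ hzero
    have : min (1 / 4) (min b₁ b₂) / logHeight s.im ≤ b₂ :=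
      (div_le_self (by positivity) hLH).trans ((min_le_right _ _).trans (min_le_right _ _))
    linarith
  · have h := hlarge s him hzero
    have : min (1 / 4) (min b₁ b₂) / logHeight s.im ≤ b₁ / logHeight s.im := by
      gcongr
      exact (min_le_right _ _).trans (min_le_left _ _)
    linarith

end ZeroFree

/-! ### The logarithmic derivative near the line `re s = 1` -/

section LogDerivBound

open Complex Metric
open scoped LSeries.notation ArithmeticFunction.vonMangoldt

lemma exists_riemannZeta₁_ne_zero_on_ball :
    ∃ b : ℝ, 0 < b ∧ b ≤ 1 / 8 ∧ ∀ c : ℂ, 1 ≤ c.re →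
      ∀ z ∈ ball c (4 * (b / logHeight c.im)), riemannZeta₁ z ≠ 0 := by
  obtain ⟨b, hb, hb4, hfree⟩ := exists_riemannZeta₁_zeroFree
  refine ⟨b / 16, by positivity, by linarith, fun c hc z hz => hfree z ?_⟩
  have hLH := one_le_logHeight c.im
  rw [mem_ball, dist_eq_norm, show 4 * (b / 16 / logHeight c.im) = b / logHeight c.im / 4 by ring]
    at hz
  have hbℓ : b / logHeight c.im ≤ b := div_le_self hb.le hLH
  have hre := abs_lt.mp ((abs_re_le_norm (z - c)).trans_lt hz)
  have him := (abs_im_le_norm (z - c)).trans_lt hz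
  rw [sub_re] at hre
  rw [sub_im] at him
  have hheight : logHeight z.im ≤ 2 * logHeight c.im := logHeight_le_two_mul <| by
    linarith [abs_sub_abs_le_abs_sub z.im c.im, abs_nonneg c.im]
  have hwidth : b / logHeight c.im / 2 ≤ b / logHeight z.im := by
    rw [div_div, mul_comm]
    have := one_le_logHeight z.im
    gcongr
  have : 0 < b / logHeight c.im := by positivity
  linarith

lemma sub_log_div_le {b ℓ : ℝ} (hb : 0 < b) (hb1 : b ≤ 1) (hℓ : 1 ≤ ℓ) :
    ℓ - Real.log (b / ℓ) ≤ (2 - Real.log b) * ℓ := by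
  rw [Real.log_div (by positivity) (by positivity)]
  nlinarith [Real.log_le_self (by linarith : 0 ≤ ℓ), Real.log_nonpos hb.le hb1]

theorem exists_norm_logDeriv_riemannZeta₁_le :
    ∃ b C : ℝ, 0 < b ∧ b ≤ 1 / 8 ∧ 0 < C ∧ ∀ s : ℂ, |s.re - 1| ≤ b / logHeight s.im →
      riemannZeta₁ s ≠ 0 ∧ ‖logDeriv riemannZeta₁ s‖ ≤ C * logHeight s.im ^ 2 := by
  obtain ⟨b, hb, hb8, hfree⟩ := exists_riemannZeta₁_ne_zero_on_ball
  obtain ⟨A, hA, hdisc⟩ := exists_norm_riemannZeta₁_le_exp_mul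
  have hlogb : Real.log b ≤ 0 := Real.log_nonpos hb.le (by linarith)
  have hconst : 0 < 2 - Real.log b := by linarith
  refine ⟨b, 6 * (A * (2 - Real.log b)) / b, hb, hb8, by positivity, fun s hs => ?_⟩
  have hLH := one_le_logHeight s.im
  set η := b / logHeight s.im with hη
  have hη0 : 0 < η := by positivity
  have hη8 : η ≤ 1 / 8 := (div_le_self hb.le hLH).trans hb8
  set c : ℂ := (1 + η : ℝ) + s.im * I with hc
  have hcre : c.re = 1 + η := by simp [hc]
  have hcim : c.im = s.im := by simp [hc]
  have hne : ∀ z ∈ ball c (4 * η), riemannZeta₁ z ≠ 0 := by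
    have := hfree c (by linarith)
    rwa [hcim, ← hη] at this
  have hsub : ball c (4 * η) ⊆ closedBall c (1 / 2) :=
    ball_subset_closedBall.trans (closedBall_subset_closedBall (by linarith))
  have hM : A * (logHeight s.im - Real.log η) ≤ A * (2 - Real.log b) * logHeight s.im := by
    rw [mul_assoc]
    gcongr
    exact sub_log_div_le hb (by linarith) hLH
  have hbound : ∀ z ∈ ball c (4 * η), ‖riemannZeta₁ z‖ ≤
      Real.exp (A * (2 - Real.log b) * logHeight s.im) * ‖riemannZeta₁ c‖ := by
    intro z hz
    have := hdisc c (by linarith) (by linarith) z (hsub hz)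
    rw [hcre, hcim, add_sub_cancel_left] at this
    exact this.trans (by gcongr)
  have hsc : s - c = ((s.re - 1 - η : ℝ) : ℂ) := by apply Complex.ext <;> simp [hc]; ring
  have hmem : s ∈ closedBall c (4 * η / 2) := by
    rw [mem_closedBall, dist_eq_norm, hsc, norm_real, Real.norm_eq_abs]
    linarith [abs_sub (s.re - 1) η, abs_of_pos hη0]
  refine ⟨hne s (closedBall_subset_ball (by linarith) hmem),
    (norm_logDeriv_le_of_ne_zero (by positivity) (by positivity)
      differentiable_riemannZeta₁.differentiableOn hne hbound hmem).trans_eq ?_⟩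
  rw [hη]
  field_simp
  norm_num

lemma norm_logDeriv_riemannZeta₁_le_ofReal_re {s : ℂ} (hs : 1 < s.re) :
    ‖logDeriv riemannZeta₁ s‖ ≤ ‖logDeriv riemannZeta₁ s.re‖ + 2 / (s.re - 1) := by
  have hpole {z : ℂ} (hz : z.re = s.re) : ‖1 / (z - 1)‖ ≤ 1 / (s.re - 1) := by
    rw [norm_div, norm_one]
    have := (le_abs_self _).trans (abs_re_le_norm (z - 1))
    rw [sub_re, one_re, hz] at this
    exact one_div_le_one_div_of_le (by linarith) this
  have h := norm_LSeries_vonMangoldt_le hs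
  rw [LSeries_vonMangoldt_eq_sub_logDeriv hs,
    LSeries_vonMangoldt_eq_sub_logDeriv (s := s.re) (by simpa using hs)] at h
  have hleft := norm_sub_norm_le (logDeriv riemannZeta₁ s) (1 / (s - 1))
  rw [norm_sub_rev] at hleft
  have hright := norm_sub_le (1 / ((s.re : ℂ) - 1)) (logDeriv riemannZeta₁ s.re)
  have := hpole (z := s) rfl
  have := hpole (z := s.re) (ofReal_re _)
  rw [show 2 / (s.re - 1) = 1 / (s.re - 1) + 1 / (s.re - 1) by ring]
  linarith

theorem exists_norm_logDeriv_riemannZeta₁_le_on_contour :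
    ∃ b C : ℝ, 0 < b ∧ b ≤ 1 / 8 ∧ 0 < C ∧ ∀ T : ℝ,
      (∀ s : ℂ, |s.im| ≤ |T| → |s.re - 1| ≤ b / logHeight T →
        riemannZeta₁ s ≠ 0 ∧ ‖logDeriv riemannZeta₁ s‖ ≤ C * logHeight T ^ 2) ∧
      ∀ s : ℂ, s.re = 1 + b / logHeight T → ‖logDeriv riemannZeta₁ s‖ ≤ C * logHeight T ^ 2 := by
  obtain ⟨b, C, hb, hb8, hC, hstrip⟩ := exists_norm_logDeriv_riemannZeta₁_le
  have hlow (T : ℝ) (s : ℂ) (him : |s.im| ≤ |T|) (hre : |s.re - 1| ≤ b / logHeight T) :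
      riemannZeta₁ s ≠ 0 ∧ ‖logDeriv riemannZeta₁ s‖ ≤ C * logHeight T ^ 2 := by
    have hLH := one_le_logHeight s.im
    have hheight := logHeight_le_of_abs_le him
    obtain ⟨hne, hle⟩ := hstrip s (hre.trans (by gcongr))
    exact ⟨hne, hle.trans (by gcongr)⟩
  refine ⟨b, C + 2 / b, hb, hb8, by positivity, fun T => ⟨fun s him hre => ?_, fun s hs => ?_⟩⟩
  · obtain ⟨hne, hle⟩ := hlow T s him hre
    exact ⟨hne, hle.trans (by gcongr; exact le_add_of_nonneg_right (by positivity))⟩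
  · have hLH := one_le_logHeight T
    have hη : 0 < b / logHeight T := by positivity
    have hreal := (hlow T s.re (by simp) (by simp [hs, abs_of_pos hη])).2
    calc ‖logDeriv riemannZeta₁ s‖
        ≤ ‖logDeriv riemannZeta₁ s.re‖ + 2 / (s.re - 1) :=
          norm_logDeriv_riemannZeta₁_le_ofReal_re (by linarith)
      _ ≤ C * logHeight T ^ 2 + 2 / b * logHeight T := by
          gcongr
          rw [hs, add_sub_cancel_left, div_div_eq_mul_div, mul_div_right_comm]
      _ ≤ C * logHeight T ^ 2 + 2 / b * logHeight T ^ 2 := by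
          gcongr
          exact le_self_pow₀ hLH two_ne_zero
      _ = (C + 2 / b) * logHeight T ^ 2 := by ring

end LogDerivBound
/-! ### Perron's formula with a smoothed kernel -/

section Perron

open Complex MeasureTheory Set
open scoped LSeries.notation ArithmeticFunction.vonMangoldt

variable {x σ : ℝ}

/-- The Mellin kernel `x ^ s / (s (s + 1))` of the Cesàro-weighted sums
`∑_{n ≤ x} a(n) (1 - n / x)`; it decays quadratically on vertical lines. -/
noncomputable def perronKernel (x : ℝ) (s : ℂ) : ℂ := (x : ℂ) ^ s / (s * (s + 1))

/-- The smoothed Chebyshev function `ψ₁(x) = ∑_{n ≤ x} Λ(n) (x - n) = ∫₀ˣ ψ`. -/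
noncomputable def smoothedPsi (x : ℝ) : ℝ := ∑ n ∈ Finset.Ioc 0 ⌊x⌋₊, Λ n * (x - n)

lemma add_one_ne_zero_of_re_pos {s : ℂ} (hs : 0 < s.re) : s + 1 ≠ 0 := by
  intro h
  have := congrArg re h
  rw [add_re, one_re, zero_re] at this
  linarith

lemma norm_perronKernel_le (hx : 0 < x) {s : ℂ} (hs : 1 / 2 ≤ s.re) :
    ‖perronKernel x s‖ ≤ 4 * x ^ s.re * (1 + s.im ^ 2)⁻¹ := by
  have hnorm : (1 + s.im ^ 2) / 4 ≤ ‖s‖ ^ 2 := by rw [Complex.sq_norm, normSq_apply]; nlinarith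
  have hshift : ‖s‖ ≤ ‖s + 1‖ := by
    refine (sq_le_sq₀ (norm_nonneg _) (norm_nonneg _)).mp ?_
    simp only [Complex.sq_norm, normSq_apply, add_re, one_re, add_im, one_im]
    nlinarith
  rw [perronKernel, norm_div, norm_cpow_eq_rpow_re_of_pos hx, norm_mul]
  calc x ^ s.re / (‖s‖ * ‖s + 1‖) ≤ x ^ s.re / ((1 + s.im ^ 2) / 4) := by
        gcongr
        exact hnorm.trans (by rw [sq]; gcongr)
    _ = 4 * x ^ s.re * (1 + s.im ^ 2)⁻¹ := by field_simp

lemma differentiableAt_perronKernel (hx : 0 < x) {s : ℂ} (hs : 0 < s.re) :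
    DifferentiableAt ℂ (perronKernel x) s := by
  have hs0 : s ≠ 0 := by rintro rfl; simp at hs
  exact (differentiableAt_id.const_cpow (Or.inl (by exact_mod_cast hx.ne'))).div (by fun_prop)
    (mul_ne_zero hs0 (add_one_ne_zero_of_re_pos hs))

lemma continuous_perronKernel (hx : 0 < x) (hσ : 0 < σ) :
    Continuous fun t : ℝ => perronKernel x (σ + t * I) :=
  continuous_iff_continuousAt.mpr fun t =>
    (differentiableAt_perronKernel hx (by simpa using hσ)).continuousAt.comp
      (f := fun t : ℝ => (σ : ℂ) + t * I) (by fun_prop)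

lemma integrable_perronKernel (hx : 0 < x) (hσ : 1 / 2 ≤ σ) :
    Integrable fun t : ℝ => perronKernel x (σ + t * I) := by
  refine (integrable_inv_one_add_sq.const_mul (4 * x ^ σ)).mono'
    (continuous_perronKernel hx (by linarith)).aestronglyMeasurable (.of_forall fun t => ?_)
  simpa using norm_perronKernel_le hx (s := σ + t * I) (by simpa using hσ)

lemma integral_cpow_mul_eq_of_hasMellin {f : ℝ → ℂ} {h : ℝ → ℝ} {F : ℂ → ℂ} (hx : 0 < x)
    (hF : ∀ t : ℝ, HasMellin f (σ + t * I) (F (σ + t * I)))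
    (hint : Integrable fun t : ℝ => F (σ + t * I)) (hfh : ∀ u : ℝ, 0 < u → f u = h u)
    (hh : ContinuousAt h x⁻¹) :
    ∫ t : ℝ, (x : ℂ) ^ ((σ : ℂ) + t * I) * F (σ + t * I) = ((2 * Real.pi * h x⁻¹ : ℝ) : ℂ) := by
  have hx' : 0 < x⁻¹ := inv_pos.mpr hx
  have hcont : ContinuousAt f x⁻¹ := by
    refine (continuous_ofReal.continuousAt.comp hh).congr ?_
    filter_upwards [isOpen_Ioi.mem_nhds hx'] with u hu using (hfh u hu).symm
  have hconv : MellinConvergent f σ := by simpa using (hF 0).1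
  have hvert : VerticalIntegrable (mellin f) σ := by
    simpa only [VerticalIntegrable, (hF _).2] using hint
  have hcpow (s : ℂ) : ((x⁻¹ : ℝ) : ℂ) ^ (-s) = (x : ℂ) ^ s := by
    rw [ofReal_inv, cpow_neg, inv_cpow _ _ (by simp [arg_ofReal_of_nonneg hx.le, Real.pi_pos.ne]),
      inv_inv]
  have hinv := mellinInv_mellin_eq σ f hx' hconv hvert hcont
  simp only [mellinInv, (hF _).2, hcpow, smul_eq_mul, hfh _ hx'] at hinv
  rw [ofReal_mul, ← hinv, real_smul, ← mul_assoc, ← ofReal_mul,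
    mul_one_div_cancel (by positivity), ofReal_one, one_mul]

lemma integral_perronKernel (hσ : 1 / 2 ≤ σ) (hx : 0 < x) :
    ∫ t : ℝ, perronKernel x (σ + t * I) = ((2 * Real.pi * max (1 - x⁻¹) 0 : ℝ) : ℂ) := by
  have hmellin (s : ℂ) (hs : 0 < s.re) : HasMellin (fun u =>
      (Ioc 0 1).indicator (fun _ : ℝ => (1 : ℂ)) u -
        (Ioc 0 1).indicator (fun t : ℝ => (t : ℂ) ^ (1 : ℂ)) u) s (perronKernel 1 s) := by
    have hone := hasMellin_one_Ioc hs
    have hid := hasMellin_cpow_Ioc 1 (s := s) (by simp; linarith)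
    have hs0 : s ≠ 0 := by rintro rfl; simp at hs
    have hs1 := add_one_ne_zero_of_re_pos hs
    have hpartial : perronKernel 1 s = 1 / s - 1 / (s + 1) := by
      rw [perronKernel, ofReal_one, one_cpow]
      field_simp
      ring
    rw [hpartial, ← hone.2, ← hid.2]
    exact hasMellin_sub hone.1 hid.1
  have hint := integrable_perronKernel one_pos hσ
  have key := integral_cpow_mul_eq_of_hasMellin hx (σ := σ) (h := fun u => max (1 - u) 0)
    (fun t => hmellin _ (by simp; linarith)) hint (fun u hu => ?_) (by fun_prop)
  · simpa only [perronKernel, ofReal_one, one_cpow, mul_one_div] using key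
  · simp only [indicator, mem_Ioc, hu, true_and, cpow_one]
    split_ifs with h
    · rw [max_eq_left (by linarith)]; push_cast; ring
    · rw [max_eq_right (by linarith)]; simp

lemma integrable_mul_perronKernel {g : ℂ → ℂ} {M : ℝ} (hx : 0 < x) (hσ : 1 / 2 ≤ σ)
    (hg : Continuous fun t : ℝ => g (σ + t * I)) (hM : ∀ t : ℝ, ‖g (σ + t * I)‖ ≤ M) :
    Integrable fun t : ℝ => g (σ + t * I) * perronKernel x (σ + t * I) :=
  (integrable_perronKernel hx hσ).bdd_mul hg.aestronglyMeasurable (.of_forall hM)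

lemma integrable_one_div_sub_one_mul_perronKernel (hσ : 1 < σ) (hx : 0 < x) :
    Integrable fun t : ℝ => 1 / ((σ : ℂ) + t * I - 1) * perronKernel x (σ + t * I) := by
  have hre (t : ℝ) : σ - 1 ≤ ‖(σ : ℂ) + t * I - 1‖ := by
    simpa using re_le_norm ((σ : ℂ) + t * I - 1)
  have hne (t : ℝ) : (σ : ℂ) + t * I - 1 ≠ 0 := norm_pos_iff.mp (by linarith [hre t])
  refine integrable_mul_perronKernel (g := fun s => 1 / (s - 1)) (M := 1 / (σ - 1)) hx
    (by linarith) (continuous_const.div (by fun_prop) hne) fun t => ?_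
  rw [norm_div, norm_one]
  exact one_div_le_one_div_of_le (by linarith) (hre t)

lemma hasMellin_one_sub_sq_div {s : ℂ} (hs : 1 < s.re) :
    HasMellin (fun u => ((1 / 2 : ℂ) • (Ioc 0 1).indicator (fun t : ℝ => (t : ℂ) ^ (-1 : ℂ)) u -
        (Ioc 0 1).indicator (fun _ : ℝ => (1 : ℂ)) u) +
        (1 / 2 : ℂ) • (Ioc 0 1).indicator (fun t : ℝ => (t : ℂ) ^ (1 : ℂ)) u) s
      (1 / (s - 1) * perronKernel 1 s) := by
  have hone := hasMellin_one_Ioc (s := s) (by linarith)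
  have hid := hasMellin_cpow_Ioc 1 (s := s) (by simp; linarith)
  have hinv := hasMellin_cpow_Ioc (-1) (s := s) (by simp; linarith)
  have hs0 : s ≠ 0 := by rintro rfl; norm_num at hs
  have hs1 := add_one_ne_zero_of_re_pos (by linarith : 0 < s.re)
  have hs1' : s - 1 ≠ 0 := by rintro h; rw [sub_eq_zero.mp h] at hs; simp at hs
  have hpartial : 1 / (s - 1) * perronKernel 1 s =
      (1 / 2 : ℂ) • (1 / (s + -1)) - 1 / s + (1 / 2 : ℂ) • (1 / (s + 1)) := by
    rw [perronKernel, ofReal_one, one_cpow, smul_eq_mul, smul_eq_mul, ← sub_eq_add_neg]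
    field_simp
    ring
  have hinv' := hasMellin_const_smul hinv.1 (1 / 2 : ℂ)
  have hid' := hasMellin_const_smul hid.1 (1 / 2 : ℂ)
  have hsub := hasMellin_sub hinv'.1 hone.1
  rw [hpartial, ← hone.2, ← hid.2, ← hinv.2, ← hinv'.2, ← hid'.2, ← hsub.2]
  exact hasMellin_add hsub.1 hid'.1

lemma integral_one_div_sub_one_mul_perronKernel (hσ : 1 < σ) (hx : 1 ≤ x) :
    ∫ t : ℝ, 1 / ((σ : ℂ) + t * I - 1) * perronKernel x (σ + t * I) =
      ((2 * Real.pi * (x / 2 - 1 + 1 / (2 * x)) : ℝ) : ℂ) := by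
  have hx0 : 0 < x := by linarith
  have hcont : ContinuousAt (fun u : ℝ => max (1 - u) 0 ^ 2 / (2 * u)) x⁻¹ :=
    ContinuousAt.div (by fun_prop) (by fun_prop) (by positivity)
  have key := integral_cpow_mul_eq_of_hasMellin hx0 (σ := σ)
    (F := fun s => 1 / (s - 1) * perronKernel 1 s)
    (fun t => hasMellin_one_sub_sq_div (by simpa using hσ))
    (integrable_one_div_sub_one_mul_perronKernel hσ one_pos) (fun u hu => ?_) hcont
  · have hvalue : max (1 - x⁻¹) 0 ^ 2 / (2 * x⁻¹) = x / 2 - 1 + 1 / (2 * x) := by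
      rw [max_eq_left (sub_nonneg.mpr (inv_le_one_of_one_le₀ hx))]
      field_simp
      ring
    rw [hvalue] at key
    rw [← key]
    congr 1 with t
    rw [perronKernel, perronKernel, ofReal_one, one_cpow]
    ring
  · have hu' : (u : ℂ) ≠ 0 := by exact_mod_cast hu.ne'
    simp only [indicator, mem_Ioc, hu, true_and, cpow_one, cpow_neg_one, smul_eq_mul]
    split_ifs with h
    · rw [max_eq_left (by linarith)]; push_cast; field_simp; ring
    · rw [max_eq_right (by linarith)]; simp

lemma LSeries_term_mul_perronKernel {a : ℕ → ℂ} {n : ℕ} (hn : n ≠ 0) (hx : 0 ≤ x) (s : ℂ) :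
    LSeries.term a s n * perronKernel x s = a n * perronKernel (x / n) s := by
  rw [LSeries.term_of_ne_zero hn, perronKernel, perronKernel, ofReal_div, ← ofReal_natCast n,
    div_cpow_ofReal_nonneg hx n.cast_nonneg]
  ring

lemma integral_LSeries_mul_perronKernel {a : ℕ → ℂ} (hσ : 1 / 2 ≤ σ) (ha : LSeriesSummable a σ)
    (hx : 0 < x) :
    ∫ t : ℝ, LSeries a (σ + t * I) * perronKernel x (σ + t * I) =
      2 * Real.pi * ∑ n ∈ Finset.Ioc 0 ⌊x⌋₊, a n * (1 - n / x) := by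
  set F : ℕ → ℝ → ℂ := fun n t =>
    LSeries.term a (σ + t * I) n * perronKernel x (σ + t * I) with hF
  have hre (t : ℝ) : ((σ : ℂ) + t * I).re = (σ : ℂ).re := by simp
  have hsum (t : ℝ) : ∑' n, F n t = LSeries a (σ + t * I) * perronKernel x (σ + t * I) :=
    tsum_mul_right
  have hterm {n : ℕ} (hn : n ≠ 0) :
      F n = fun t : ℝ => a n * perronKernel (x / n) (σ + t * I) := by
    ext t
    exact LSeries_term_mul_perronKernel hn hx.le _
  have hint (n : ℕ) : Integrable (F n) := by
    rcases n.eq_zero_or_pos with rfl | hn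
    · simp [hF]
    · rw [hterm hn.ne']
      exact (integrable_perronKernel (by positivity) hσ).const_mul _
  have hnorm (n : ℕ) (t : ℝ) :
      ‖F n t‖ = ‖LSeries.term a σ n‖ * ‖perronKernel x (σ + t * I)‖ := by
    simp only [hF, norm_mul, LSeries.norm_term_eq, hre]
  have hsummable : Summable fun n => ∫ t, ‖F n t‖ := by
    simp only [hnorm, integral_const_mul]
    exact ha.norm.mul_right _
  have hvalue (n : ℕ) : ∫ t, F n t =
      if n ∈ Finset.Ioc 0 ⌊x⌋₊ then 2 * Real.pi * (a n * (1 - n / x)) else 0 := by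
    rcases n.eq_zero_or_pos with rfl | hn
    · simp [hF]
    rw [hterm hn.ne', integral_const_mul, integral_perronKernel hσ (by positivity), inv_div]
    simp only [Finset.mem_Ioc, hn, true_and, Nat.le_floor_iff hx.le]
    split_ifs with hnx
    · rw [max_eq_left (sub_nonneg.mpr ((div_le_one hx).mpr hnx))]
      push_cast
      ring
    · rw [max_eq_right (sub_nonpos.mpr ((one_le_div hx).mpr (not_le.mp hnx).le))]
      simp
  have key := (hasSum_integral_of_summable_integral_norm hint hsummable).tsum_eq
  simp only [hsum, hvalue] at key
  rw [← key, tsum_eq_sum (s := Finset.Ioc 0 ⌊x⌋₊) fun n hn => if_neg hn, Finset.mul_sum]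
  exact Finset.sum_congr rfl fun n hn => if_pos hn

lemma continuous_logDeriv_riemannZeta₁ (hσ : 1 < σ) :
    Continuous fun t : ℝ => logDeriv riemannZeta₁ (σ + t * I) := by
  have hderiv : Continuous (deriv riemannZeta₁) :=
    (differentiable_riemannZeta₁.contDiff (n := 1)).continuous_deriv le_rfl
  have hline : Continuous fun t : ℝ => (σ : ℂ) + t * I := by fun_prop
  exact (hderiv.comp hline).div (differentiable_riemannZeta₁.continuous.comp hline) fun t =>
    riemannZeta₁_ne_zero_of_one_le_re (by simpa using hσ.le)

lemma integrable_logDeriv_riemannZeta₁_mul_perronKernel (hσ : 1 < σ) (hx : 0 < x) :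
    Integrable fun t : ℝ => logDeriv riemannZeta₁ (σ + t * I) * perronKernel x (σ + t * I) :=
  integrable_mul_perronKernel hx (by linarith) (continuous_logDeriv_riemannZeta₁ hσ) fun t => by
    simpa using norm_logDeriv_riemannZeta₁_le_ofReal_re (s := σ + t * I) (by simpa using hσ)

theorem integral_logDeriv_riemannZeta₁_mul_perronKernel (hσ : 1 < σ) (hx : 1 ≤ x) :
    ∫ t : ℝ, logDeriv riemannZeta₁ (σ + t * I) * perronKernel x (σ + t * I) =
      ((2 * Real.pi * (x / 2 - 1 + 1 / (2 * x) - smoothedPsi x / x) : ℝ) : ℂ) := by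
  have hx0 : 0 < x := by linarith
  have hsum := integral_LSeries_mul_perronKernel (a := ↗Λ) (by linarith : 1 / 2 ≤ σ)
    (ArithmeticFunction.LSeriesSummable_vonMangoldt (by simpa using hσ)) hx0
  have hpsi : smoothedPsi x / x = ∑ n ∈ Finset.Ioc 0 ⌊x⌋₊, Λ n * (1 - n / x) := by
    rw [smoothedPsi, Finset.sum_div]
    exact Finset.sum_congr rfl fun n _ => by field_simp
  have hpole := integral_one_div_sub_one_mul_perronKernel hσ hx
  have hsplit (t : ℝ) : LSeries ↗Λ (σ + t * I) * perronKernel x (σ + t * I) =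
      1 / ((σ : ℂ) + t * I - 1) * perronKernel x (σ + t * I) -
        logDeriv riemannZeta₁ (σ + t * I) * perronKernel x (σ + t * I) := by
    rw [LSeries_vonMangoldt_eq_sub_logDeriv (by simpa using hσ), sub_mul]
  simp only [hsplit] at hsum
  rw [integral_sub (integrable_one_div_sub_one_mul_perronKernel hσ hx0)
    (integrable_logDeriv_riemannZeta₁_mul_perronKernel hσ hx0), hpole, sub_eq_iff_eq_add,
    ← sub_eq_iff_eq_add'] at hsum
  rw [← hsum, hpsi]
  push_cast
  ring

end Perron
/-! ### Shifting the contour -/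

section Contour

open Complex MeasureTheory Set
open scoped Interval

lemma arctan_le_self {t : ℝ} (ht : 0 ≤ t) : Real.arctan t ≤ t := by
  simpa using Real.le_tan (Real.arctan_nonneg.mpr ht) (Real.arctan_lt_pi_div_two t)

lemma intervalIntegral_inv_one_add_sq_symm (T : ℝ) :
    ∫ t in (-T)..T, (1 + t ^ 2)⁻¹ = 2 * Real.arctan T := by
  rw [integral_inv_one_add_sq, Real.arctan_neg]
  ring

lemma integral_compl_Ioc_inv_one_add_sq_le {T : ℝ} (hT : 0 < T) :
    ∫ t in (Ioc (-T) T)ᶜ, (1 + t ^ 2)⁻¹ ≤ 2 / T := by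
  have hsplit := integral_add_compl (measurableSet_Ioc (a := -T) (b := T)) integrable_inv_one_add_sq
  rw [integral_univ_inv_one_add_sq, ← intervalIntegral.integral_of_le (by linarith),
    intervalIntegral_inv_one_add_sq_symm] at hsplit
  have harctan := Real.arctan_inv_of_pos hT
  rw [div_eq_mul_inv]
  linarith [arctan_le_self (inv_nonneg.mpr hT.le)]

variable {G : ℂ → ℂ} {a b T A B : ℝ}

lemma norm_intervalIntegral_le_of_rectangle
    (hG : DifferentiableOn ℂ G ([[a, b]] ×ℂ [[-T, T]])) :
    ‖∫ t in (-T)..T, G (b + t * I)‖ ≤ ‖∫ t in (-T)..T, G (a + t * I)‖ +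
      (‖∫ u in a..b, G (u + T * I)‖ + ‖∫ u in a..b, G (u + (-T : ℝ) * I)‖) := by
  have hrect := integral_boundary_rect_eq_zero_of_differentiableOn G
    (a + (-T : ℝ) * I) (b + T * I) (by simpa using hG)
  simp only [add_re, ofReal_re, re_ofReal_mul, I_re, mul_zero, add_zero, add_im, ofReal_im,
    im_ofReal_mul, I_im, mul_one, zero_add, smul_eq_mul] at hrect
  have hshift : I * ∫ t in (-T)..T, G (b + t * I) = I * (∫ t in (-T)..T, G (a + t * I)) +
      ((∫ u in a..b, G (u + T * I)) - ∫ u in a..b, G (u + (-T : ℝ) * I)) := by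
    linear_combination hrect
  have hnorm (z : ℂ) : ‖z‖ = ‖I * z‖ := by simp
  rw [hnorm, hshift, hnorm (∫ t in (-T)..T, G (a + t * I))]
  exact (norm_add_le _ _).trans (by gcongr; exact norm_sub_le _ _)

lemma norm_intervalIntegral_le_pi_mul (hT : 0 ≤ T) (hA : 0 ≤ A)
    (hG : ∀ t ∈ Icc (-T) T, ‖G (a + t * I)‖ ≤ A * (1 + t ^ 2)⁻¹) :
    ‖∫ t in (-T)..T, G (a + t * I)‖ ≤ Real.pi * A :=
  calc ‖∫ t in (-T)..T, G (a + t * I)‖ ≤ ∫ t in (-T)..T, A * (1 + t ^ 2)⁻¹ :=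
        intervalIntegral.norm_integral_le_of_norm_le (by linarith)
          (.of_forall fun t ht => hG t (Ioc_subset_Icc_self ht))
          (integrable_inv_one_add_sq.const_mul A).intervalIntegrable
    _ = A * (2 * Real.arctan T) := by
        rw [intervalIntegral.integral_const_mul, intervalIntegral_inv_one_add_sq_symm]
    _ ≤ Real.pi * A := by
        rw [mul_comm]
        gcongr
        linarith [Real.arctan_lt_pi_div_two T]

theorem norm_integral_vertical_le (hab : a ≤ b) (hT : 0 < T) (hA : 0 ≤ A) (hB : 0 ≤ B)
    (hG : DifferentiableOn ℂ G ([[a, b]] ×ℂ [[-T, T]]))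
    (hint : Integrable fun t : ℝ => G (b + t * I))
    (hleft : ∀ t ∈ Icc (-T) T, ‖G (a + t * I)‖ ≤ A * (1 + t ^ 2)⁻¹)
    (hright : ∀ t : ℝ, ‖G (b + t * I)‖ ≤ B * (1 + t ^ 2)⁻¹)
    (hhorizontal : ∀ u ∈ Icc a b, ∀ t : ℝ, |t| = T → ‖G (u + t * I)‖ ≤ B * (1 + T ^ 2)⁻¹) :
    ‖∫ t : ℝ, G (b + t * I)‖ ≤ Real.pi * A + (b - a + 2) * (B / T) := by
  have hside (t : ℝ) (ht : |t| = T) :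
      ‖∫ u in a..b, G (u + t * I)‖ ≤ B * (1 + T ^ 2)⁻¹ * (b - a) := by
    rw [← abs_of_nonneg (sub_nonneg.mpr hab)]
    refine intervalIntegral.norm_integral_le_of_norm_le_const fun u hu => ?_
    rw [uIoc_of_le hab] at hu
    exact hhorizontal u (Ioc_subset_Icc_self hu) t ht
  have htail : ‖∫ t in (Ioc (-T) T)ᶜ, G (b + t * I)‖ ≤ B * (2 / T) :=
    calc ‖∫ t in (Ioc (-T) T)ᶜ, G (b + t * I)‖ ≤ ∫ t in (Ioc (-T) T)ᶜ, B * (1 + t ^ 2)⁻¹ :=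
          norm_integral_le_of_norm_le (integrable_inv_one_add_sq.const_mul B).integrableOn
            (.of_forall hright)
      _ ≤ B * (2 / T) := by
          rw [integral_const_mul]
          gcongr
          exact integral_compl_Ioc_inv_one_add_sq_le hT
  have hinv : 2 * (1 + T ^ 2)⁻¹ ≤ 1 / T := by
    rw [← div_eq_mul_inv, div_le_div_iff₀ (by positivity) hT]
    nlinarith [sq_nonneg (T - 1)]
  calc ‖∫ t : ℝ, G (b + t * I)‖
      ≤ ‖∫ t in (-T)..T, G (b + t * I)‖ + ‖∫ t in (Ioc (-T) T)ᶜ, G (b + t * I)‖ := by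
        rw [← integral_add_compl measurableSet_Ioc hint,
          intervalIntegral.integral_of_le (by linarith)]
        exact norm_add_le _ _
    _ ≤ Real.pi * A + (B * (1 + T ^ 2)⁻¹ * (b - a) + B * (1 + T ^ 2)⁻¹ * (b - a)) +
          B * (2 / T) := by
        gcongr
        refine (norm_intervalIntegral_le_of_rectangle hG).trans ?_
        gcongr
        · exact norm_intervalIntegral_le_pi_mul hT.le hA hleft
        · exact hside T (abs_of_pos hT)
        · exact hside (-T) (by rw [abs_neg, abs_of_pos hT])
    _ = Real.pi * A + (b - a) * B * (2 * (1 + T ^ 2)⁻¹) + B * (2 / T) := by ring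
    _ ≤ Real.pi * A + (b - a) * B * (1 / T) + B * (2 / T) := by
        have := mul_nonneg (sub_nonneg.mpr hab) hB
        gcongr
    _ = Real.pi * A + (b - a + 2) * (B / T) := by ring

theorem norm_integral_mul_perronKernel_le {F : ℂ → ℂ} {x δ M : ℝ} (hx : 1 ≤ x) (hT : 0 < T)
    (hδ : 0 ≤ δ) (hδ2 : δ ≤ 1 / 2) (hM : 0 ≤ M)
    (hF : ∀ s : ℂ, |s.im| ≤ T → |s.re - 1| ≤ δ → DifferentiableAt ℂ F s ∧ ‖F s‖ ≤ M)
    (hline : ∀ s : ℂ, s.re = 1 + δ → ‖F s‖ ≤ M)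
    (hint : Integrable fun t : ℝ =>
      F ((1 + δ : ℝ) + t * I) * perronKernel x ((1 + δ : ℝ) + t * I)) :
    ‖∫ t : ℝ, F ((1 + δ : ℝ) + t * I) * perronKernel x ((1 + δ : ℝ) + t * I)‖ ≤
      2 * Real.pi * (4 * M * (x ^ (1 - δ) + x ^ (1 + δ) / T)) := by
  have hx0 : 0 < x := by linarith
  set G : ℂ → ℂ := fun s => F s * perronKernel x s
  have hbound {u t : ℝ} (hu : 1 / 2 ≤ u) (h : ‖F (u + t * I)‖ ≤ M) :
      ‖G (u + t * I)‖ ≤ 4 * M * x ^ u * (1 + t ^ 2)⁻¹ := by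
    have hkernel := norm_perronKernel_le hx0 (s := u + t * I) (by simpa using hu)
    simp only [add_re, ofReal_re, re_ofReal_mul, I_re, mul_zero, add_zero, add_im, ofReal_im,
      im_ofReal_mul, I_im, mul_one, zero_add] at hkernel
    calc ‖G (u + t * I)‖ ≤ M * (4 * x ^ u * (1 + t ^ 2)⁻¹) := by rw [norm_mul]; gcongr
      _ = 4 * M * x ^ u * (1 + t ^ 2)⁻¹ := by ring
  have hstrip {u t : ℝ} (ht : |t| ≤ T) (hu : u ∈ Icc (1 - δ) (1 + δ)) :=
    (hF (u + t * I) (by simpa using ht)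
      (by simpa using abs_le.mpr ⟨by linarith [hu.1], by linarith [hu.2]⟩)).2
  have hdiff : DifferentiableOn ℂ G ([[1 - δ, 1 + δ]] ×ℂ [[-T, T]]) := by
    intro s hs
    rw [mem_reProdIm, uIcc_of_le (by linarith), uIcc_of_le (by linarith)] at hs
    have hre : |s.re - 1| ≤ δ := abs_le.mpr ⟨by linarith [hs.1.1], by linarith [hs.1.2]⟩
    exact ((hF s (abs_le.mpr hs.2) hre).1.mul
      (differentiableAt_perronKernel hx0 (by linarith [hs.1.1]))).differentiableWithinAt
  have hshift := norm_integral_vertical_le (by linarith : 1 - δ ≤ 1 + δ) hT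
    (by positivity : 0 ≤ 4 * M * x ^ (1 - δ)) (by positivity : 0 ≤ 4 * M * x ^ (1 + δ)) hdiff hint
    (fun t ht => hbound (by linarith) (hstrip (abs_le.mpr ht) ⟨le_rfl, by linarith⟩))
    (fun t => hbound (by linarith) (hline _ (by simp)))
    (fun u hu t ht => (hbound (by linarith [hu.1]) (hstrip ht.le hu)).trans (by
      rw [← sq_abs t, ht]
      gcongr
      exact hu.2))
  have hwidth : 1 + δ - (1 - δ) + 2 ≤ 2 * Real.pi := by linarith [Real.pi_gt_three]
  calc ‖∫ t : ℝ, G ((1 + δ : ℝ) + t * I)‖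
      ≤ Real.pi * (4 * M * x ^ (1 - δ)) + 2 * Real.pi * (4 * M * x ^ (1 + δ) / T) :=
        hshift.trans (by gcongr)
    _ ≤ 2 * Real.pi * (4 * M * x ^ (1 - δ)) + 2 * Real.pi * (4 * M * x ^ (1 + δ) / T) := by
        gcongr
        linarith [Real.pi_pos]
    _ = 2 * Real.pi * (4 * M * (x ^ (1 - δ) + x ^ (1 + δ) / T)) := by ring

lemma differentiableAt_logDeriv_riemannZeta₁ {s : ℂ} (hs : riemannZeta₁ s ≠ 0) :
    DifferentiableAt ℂ (logDeriv riemannZeta₁) s :=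
  ((differentiable_riemannZeta₁.contDiff (n := 2)).differentiable_deriv_two s).div
    (differentiable_riemannZeta₁ s) hs

theorem abs_smoothedPsi_div_sub_le {x δ M : ℝ} (hx : 1 ≤ x) (hT : 0 < T) (hδ : 0 < δ)
    (hδ2 : δ ≤ 1 / 2) (hM : 0 ≤ M)
    (hstrip : ∀ s : ℂ, |s.im| ≤ T → |s.re - 1| ≤ δ →
      riemannZeta₁ s ≠ 0 ∧ ‖logDeriv riemannZeta₁ s‖ ≤ M)
    (hline : ∀ s : ℂ, s.re = 1 + δ → ‖logDeriv riemannZeta₁ s‖ ≤ M) :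
    |x / 2 - 1 + 1 / (2 * x) - smoothedPsi x / x| ≤
      4 * M * (x ^ (1 - δ) + x ^ (1 + δ) / T) := by
  have hshift := norm_integral_mul_perronKernel_le hx hT hδ.le hδ2 hM
    (fun s him hre => (hstrip s him hre).imp_left differentiableAt_logDeriv_riemannZeta₁) hline
    (integrable_logDeriv_riemannZeta₁_mul_perronKernel (by linarith) (by linarith))
  rw [integral_logDeriv_riemannZeta₁_mul_perronKernel (by linarith) hx, norm_real, Real.norm_eq_abs,
    abs_mul, abs_of_pos Real.two_pi_pos] at hshift
  exact le_of_mul_le_mul_left hshift Real.two_pi_pos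

end Contour

/-! ### The error factor of the prime number theorem -/

section ErrorFactor

open Set

/-- The factor `exp (-c √(log x))` by which the classical zero-free region improves on trivial
bounds. -/
noncomputable def expNegSqrtLog (c x : ℝ) : ℝ := Real.exp (-c * √(Real.log x))

variable {c d x y : ℝ}

lemma expNegSqrtLog_pos (c x : ℝ) : 0 < expNegSqrtLog c x := Real.exp_pos _

lemma expNegSqrtLog_le_one (hc : 0 ≤ c) (x : ℝ) : expNegSqrtLog c x ≤ 1 :=
  Real.exp_le_one_iff.mpr (mul_nonpos_of_nonpos_of_nonneg (neg_nonpos.mpr hc) (Real.sqrt_nonneg _))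

lemma expNegSqrtLog_le_of_le_left (hcd : c ≤ d) (x : ℝ) :
    expNegSqrtLog d x ≤ expNegSqrtLog c x := by
  unfold expNegSqrtLog
  gcongr

lemma expNegSqrtLog_le_of_le_right (hc : 0 ≤ c) (hx : 0 < x) (hxy : x ≤ y) :
    expNegSqrtLog c y ≤ expNegSqrtLog c x := by
  simp only [expNegSqrtLog, neg_mul]
  gcongr

lemma expNegSqrtLog_add (c d x : ℝ) :
    expNegSqrtLog (c + d) x = expNegSqrtLog c x * expNegSqrtLog d x := by
  rw [expNegSqrtLog, expNegSqrtLog, expNegSqrtLog, ← Real.exp_add]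
  ring_nf

lemma expNegSqrtLog_half_mul_self (c x : ℝ) :
    expNegSqrtLog (c / 2) x * expNegSqrtLog (c / 2) x = expNegSqrtLog c x := by
  rw [← expNegSqrtLog_add, add_halves]

lemma expNegSqrtLog_le_half (hc : 0 ≤ c) (hxy : Real.log x ≤ 4 * Real.log y) :
    expNegSqrtLog c y ≤ expNegSqrtLog (c / 2) x := by
  have hsqrt : √(Real.log x) ≤ 2 * √(Real.log y) := by
    refine (Real.sqrt_le_sqrt hxy).trans_eq ?_
    rw [Real.sqrt_mul (by norm_num), show (4 : ℝ) = 2 ^ 2 by norm_num, Real.sqrt_sq zero_le_two]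
  refine Real.exp_le_exp.mpr ?_
  linarith [mul_le_mul_of_nonneg_left hsqrt hc]

lemma expNegSqrtLog_sqrt_le (hc : 0 ≤ c) (hx : 1 ≤ x) :
    expNegSqrtLog c √x ≤ expNegSqrtLog (c / 2) x := by
  refine expNegSqrtLog_le_half hc ?_
  rw [Real.log_sqrt (by linarith)]
  linarith [Real.log_nonneg hx]

lemma log_pow_mul_expNegSqrtLog_le (hc : 0 < c) (hx : 1 ≤ x) (n : ℕ) :
    Real.log x ^ n * expNegSqrtLog c x ≤ (2 * n).factorial / c ^ (2 * n) := by
  have hexp := Real.pow_div_factorial_le_exp (x := c * √(Real.log x)) (by positivity) (2 * n)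
  rw [mul_pow, pow_mul (√_), Real.sq_sqrt (Real.log_nonneg hx), div_le_iff₀ (by positivity)] at hexp
  rw [expNegSqrtLog, neg_mul, Real.exp_neg, ← div_eq_mul_inv,
    div_le_div_iff₀ (Real.exp_pos _) (by positivity)]
  linarith

lemma half_le_log (hx : 2 ≤ x) : 1 / 2 ≤ Real.log x := by
  linarith [Real.log_two_gt_d9, Real.log_le_log two_pos hx]

lemma sqrt_mul_expNegSqrtLog (hx : 1 ≤ x) :
    √x * expNegSqrtLog c x = Real.exp (√(Real.log x) * (√(Real.log x) / 2 - c)) := by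
  have hlog := Real.sq_sqrt (Real.log_nonneg hx)
  rw [← Real.exp_log (Real.sqrt_pos.mpr (by linarith)), Real.log_sqrt (by linarith),
    expNegSqrtLog, ← Real.exp_add]
  nth_rw 1 [← hlog]
  ring_nf

lemma half_le_sqrt_log (hx : 2 ≤ x) : 1 / 2 ≤ √(Real.log x) :=
  Real.le_sqrt_of_sq_le (by linarith [half_le_log hx])

lemma monotoneOn_sqrt_mul_expNegSqrtLog (hc : c ≤ 1 / 4) :
    MonotoneOn (fun x => √x * expNegSqrtLog c x) (Ici 2) := by
  intro x hx y hy hxy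
  rw [mem_Ici] at hx hy
  have hlog : √(Real.log x) ≤ √(Real.log y) := by gcongr
  simp only [sqrt_mul_expNegSqrtLog (show 1 ≤ x by linarith),
    sqrt_mul_expNegSqrtLog (show 1 ≤ y by linarith)]
  gcongr
  linarith [half_le_sqrt_log hx]

lemma one_le_sqrt_mul_expNegSqrtLog (hc : c ≤ 1 / 4) (hx : 2 ≤ x) :
    1 ≤ √x * expNegSqrtLog c x := by
  rw [sqrt_mul_expNegSqrtLog (by linarith), Real.one_le_exp_iff]
  exact mul_nonneg (Real.sqrt_nonneg _) (by linarith [half_le_sqrt_log hx])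

lemma sqrt_le_mul_expNegSqrtLog (hc : c ≤ 1 / 4) (hx : 2 ≤ x) : √x ≤ x * expNegSqrtLog c x :=
  calc √x ≤ √x * (√x * expNegSqrtLog c x) :=
        le_mul_of_one_le_right (Real.sqrt_nonneg _) (one_le_sqrt_mul_expNegSqrtLog hc hx)
    _ = x * expNegSqrtLog c x := by rw [← mul_assoc, Real.mul_self_sqrt (by linarith)]

lemma one_le_mul_expNegSqrtLog (hc : c ≤ 1 / 4) (hx : 2 ≤ x) : 1 ≤ x * expNegSqrtLog c x :=
  (Real.one_le_sqrt.mpr (by linarith)).trans (sqrt_le_mul_expNegSqrtLog hc hx)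

lemma rpow_one_sub_le_mul_expNegSqrtLog {δ : ℝ} (hx : 1 ≤ x) (hδ : c ≤ δ * √(Real.log x)) :
    x ^ (1 - δ) ≤ x * expNegSqrtLog c x := by
  have hx0 : 0 < x := by linarith
  rw [sub_eq_add_neg, Real.rpow_add hx0, Real.rpow_one, Real.rpow_def_of_pos hx0, expNegSqrtLog,
    ← Real.sq_sqrt (Real.log_nonneg hx), Real.sqrt_sq (Real.sqrt_nonneg _)]
  refine mul_le_mul_of_nonneg_left (Real.exp_le_exp.mpr ?_) hx0.le
  linarith [mul_le_mul_of_nonneg_right hδ (Real.sqrt_nonneg (Real.log x))]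

lemma rpow_one_add_div_exp_le_mul_expNegSqrtLog {δ : ℝ} (hx : 1 ≤ x)
    (hδ : δ * √(Real.log x) ≤ 1 - c) :
    x ^ (1 + δ) / Real.exp √(Real.log x) ≤ x * expNegSqrtLog c x := by
  have hx0 : 0 < x := by linarith
  rw [Real.rpow_add hx0, Real.rpow_one, Real.rpow_def_of_pos hx0, expNegSqrtLog, mul_div_assoc,
    ← Real.exp_sub, ← Real.sq_sqrt (Real.log_nonneg hx), Real.sqrt_sq (Real.sqrt_nonneg _)]
  gcongr
  linarith [mul_le_mul_of_nonneg_right hδ (Real.sqrt_nonneg (Real.log x))]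

end ErrorFactor

/-! ### The prime number theorem for `ψ₁`, `ψ` and `θ` -/

section ChebyshevFunctions

open Finset
open scoped ArithmeticFunction.vonMangoldt

lemma le_logHeight_exp (l : ℝ) : l ≤ logHeight (Real.exp l) := by
  rw [logHeight, Real.le_log_iff_exp_le (by positivity), Real.abs_exp]
  linarith

lemma logHeight_exp_le {l : ℝ} (hl : 1 ≤ l) : logHeight (Real.exp l) ≤ 3 * l := by
  have hexp : 2 ≤ Real.exp l := by linarith [Real.add_one_le_exp l]
  rw [logHeight, Real.log_le_iff_le_exp (by positivity), Real.abs_exp,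
    show 3 * l = l + l + l by ring, Real.exp_add, Real.exp_add]
  nlinarith

-- Balance the two terms of the contour shift by taking `T = exp √(log x)`.
theorem exists_abs_smoothedPsi_div_sub_le : ∃ c C : ℝ, 0 < c ∧ c ≤ 1 / 4 ∧ 0 < C ∧
    ∀ x : ℝ, Real.exp 1 ≤ x →
      |x / 2 - 1 + 1 / (2 * x) - smoothedPsi x / x| ≤ C * (x * expNegSqrtLog c x) := by
  obtain ⟨b, C, hb, hb8, hC, hcontour⟩ := exists_norm_logDeriv_riemannZeta₁_le_on_contour
  refine ⟨b / 3 / 2, 72 * C * (2 / (b / 3 / 2) ^ 2), by positivity,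
    by linarith, by positivity, fun x hx => ?_⟩
  have hx1 : 1 ≤ x := (Real.one_le_exp zero_le_one).trans hx
  set l := √(Real.log x)
  have hl_sq : l ^ 2 = Real.log x := Real.sq_sqrt (Real.log_nonneg hx1)
  have hl1 : 1 ≤ l := Real.one_le_sqrt.mpr ((Real.le_log_iff_exp_le (by linarith)).mpr hx)
  set L := logHeight (Real.exp l)
  have hlL : l ≤ L := le_logHeight_exp l
  have hL3 : L ≤ 3 * l := logHeight_exp_le hl1
  have hL1 : 1 ≤ L := one_le_logHeight _
  obtain ⟨hstrip, hline⟩ := hcontour (Real.exp l)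
  rw [Real.abs_exp] at hstrip
  have hleft : x ^ (1 - b / L) ≤ x * expNegSqrtLog (b / 3) x := by
    refine rpow_one_sub_le_mul_expNegSqrtLog hx1 ?_
    rw [div_mul_eq_mul_div, div_le_div_iff₀ three_pos (by linarith)]
    linarith [mul_le_mul_of_nonneg_left hL3 hb.le]
  have hright : x ^ (1 + b / L) / Real.exp l ≤ x * expNegSqrtLog (b / 3) x := by
    refine rpow_one_add_div_exp_le_mul_expNegSqrtLog hx1 ?_
    rw [div_mul_eq_mul_div, div_le_iff₀ (by linarith)]
    nlinarith [mul_le_mul_of_nonneg_left hlL hb.le]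
  have hE := expNegSqrtLog_pos (b / 3 / 2) x
  calc |x / 2 - 1 + 1 / (2 * x) - smoothedPsi x / x|
      ≤ 4 * (C * L ^ 2) * (x ^ (1 - b / L) + x ^ (1 + b / L) / Real.exp l) :=
        abs_smoothedPsi_div_sub_le hx1 (Real.exp_pos l) (by positivity)
          ((div_le_self hb.le hL1).trans (by linarith)) (by positivity) hstrip hline
    _ ≤ 4 * (C * (3 * l) ^ 2) * (x * expNegSqrtLog (b / 3) x + x * expNegSqrtLog (b / 3) x) := by
        gcongr
    _ = 72 * C * (Real.log x * expNegSqrtLog (b / 3 / 2) x) *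
          (x * expNegSqrtLog (b / 3 / 2) x) := by
        rw [← expNegSqrtLog_half_mul_self (b / 3), ← hl_sq]
        ring
    _ ≤ 72 * C * (2 / (b / 3 / 2) ^ 2) *
          (x * expNegSqrtLog (b / 3 / 2) x) := by
        gcongr
        simpa using log_pow_mul_expNegSqrtLog_le (by positivity : 0 < b / 3 / 2) hx1 1

theorem exists_abs_smoothedPsi_sub_le : ∃ c C : ℝ, 0 < c ∧ c ≤ 1 / 4 ∧ 0 < C ∧
    ∀ x : ℝ, Real.exp 1 ≤ x →
      |smoothedPsi x - x ^ 2 / 2| ≤ C * (x ^ 2 * expNegSqrtLog c x) := by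
  obtain ⟨c, C, hc, hc4, hC, hbound⟩ := exists_abs_smoothedPsi_div_sub_le
  refine ⟨c, C + 1, hc, hc4, by positivity, fun x hx => ?_⟩
  have hx2 : 2 ≤ x := by linarith [Real.exp_one_gt_d9]
  have hx0 : 0 < x := by linarith
  have hlower : |1 - 1 / (2 * x)| ≤ 1 := by
    have hinv : 1 / (2 * x) ≤ 1 := (div_le_one (by positivity)).mpr (by linarith)
    have hinv0 : 0 < 1 / (2 * x) := by positivity
    exact abs_le.mpr ⟨by linarith, by linarith⟩
  calc |smoothedPsi x - x ^ 2 / 2|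
      = x * |(x / 2 - 1 + 1 / (2 * x) - smoothedPsi x / x) + (1 - 1 / (2 * x))| := by
        rw [← abs_of_pos hx0, ← abs_mul, abs_of_pos hx0, ← abs_neg]
        congr 1
        field_simp
        ring
    _ ≤ x * (C * (x * expNegSqrtLog c x) + x * expNegSqrtLog c x) := by
        gcongr
        exact (abs_add_le _ _).trans (add_le_add (hbound x hx)
          (hlower.trans (one_le_mul_expNegSqrtLog hc4 hx2)))
    _ = (C + 1) * (x ^ 2 * expNegSqrtLog c x) := by ring

lemma smoothedPsi_add_mul_psi_le (y : ℝ) {z : ℝ} (hz : 0 ≤ z) :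
    smoothedPsi y + (z - y) * Chebyshev.psi y ≤ smoothedPsi z := by
  have htangent : smoothedPsi y + (z - y) * Chebyshev.psi y =
      ∑ n ∈ Ioc 0 ⌊y⌋₊, Λ n * (z - n) := by
    rw [smoothedPsi, Chebyshev.psi, mul_sum, ← sum_add_distrib]
    exact sum_congr rfl fun n _ => by ring
  rw [htangent, smoothedPsi]
  rcases le_total y z with hyz | hzy
  · refine sum_le_sum_of_subset_of_nonneg (Ioc_subset_Ioc_right (Nat.floor_le_floor hyz)) ?_
    intro n hn _
    rw [mem_Ioc, Nat.le_floor_iff hz] at hn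
    exact mul_nonneg ArithmeticFunction.vonMangoldt_nonneg (by linarith)
  · rw [← sum_sdiff (Ioc_subset_Ioc_right (Nat.floor_le_floor hzy))]
    refine add_le_of_nonpos_left (sum_nonpos fun n hn => ?_)
    rw [mem_sdiff, mem_Ioc, mem_Ioc, not_and, not_le] at hn
    have hzn : z < n := (Nat.floor_lt hz).mp (hn.2 hn.1.1)
    exact mul_nonpos_of_nonneg_of_nonpos ArithmeticFunction.vonMangoldt_nonneg (by linarith)

lemma abs_psi_sub_le_of_abs_smoothedPsi_sub_le {x k η : ℝ} (hk : 0 < k) (hkx : k ≤ x)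
    (hη : ∀ t ∈ Set.Icc (x - k) (x + k), |smoothedPsi t - t ^ 2 / 2| ≤ η) :
    |Chebyshev.psi x - x| ≤ k / 2 + 2 * η / k := by
  have hupper := smoothedPsi_add_mul_psi_le x (by linarith : 0 ≤ x + k)
  have hlower := smoothedPsi_add_mul_psi_le x (by linarith : 0 ≤ x - k)
  have hmid := abs_le.mp (hη x ⟨by linarith, by linarith⟩)
  have hleft := abs_le.mp (hη (x - k) ⟨le_rfl, by linarith⟩)
  have hright := abs_le.mp (hη (x + k) ⟨by linarith, le_rfl⟩)
  have hmul : |k * (Chebyshev.psi x - x)| ≤ k ^ 2 / 2 + 2 * η :=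
    abs_le.mpr ⟨by linarith, by linarith⟩
  rw [abs_mul, abs_of_pos hk] at hmul
  refine le_of_mul_le_mul_left (hmul.trans_eq ?_) hk
  field_simp

theorem exists_abs_psi_sub_le : ∃ c C : ℝ, 0 < c ∧ c ≤ 1 / 4 ∧ 0 < C ∧
    ∀ x : ℝ, 2 * Real.exp 1 ≤ x → |Chebyshev.psi x - x| ≤ C * (x * expNegSqrtLog c x) := by
  obtain ⟨c, C, hc, hc4, hC, hbound⟩ := exists_abs_smoothedPsi_sub_le
  refine ⟨c / 2 / 2, 9 * C + 1, by positivity, by linarith, by positivity, fun x hx => ?_⟩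
  have he := Real.exp_one_gt_d9
  have hx0 : 0 < x := by linarith
  set q := expNegSqrtLog (c / 2 / 2) x with hq
  have hq0 : 0 < q := expNegSqrtLog_pos _ _
  have hkx : x / 2 * q ≤ x / 2 :=
    mul_le_of_le_one_right (by linarith) (expNegSqrtLog_le_one (by positivity) x)
  have hhalf : expNegSqrtLog c (x / 2) ≤ q * q := by
    rw [hq, expNegSqrtLog_half_mul_self]
    refine expNegSqrtLog_le_half hc.le ?_
    have hlog : 1 ≤ Real.log (x / 2) := (Real.le_log_iff_exp_le (by positivity)).mpr (by linarith)
    rw [Real.log_div hx0.ne' two_ne_zero] at hlog ⊢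
    linarith [Real.log_two_lt_d9]
  have hnear : ∀ t ∈ Set.Icc (x - x / 2 * q) (x + x / 2 * q),
      |smoothedPsi t - t ^ 2 / 2| ≤ C * ((3 / 2 * x) ^ 2 * (q * q)) := by
    rintro t ⟨hxt, htx⟩
    refine (hbound t (by linarith)).trans ?_
    have hEt : expNegSqrtLog c t ≤ q * q :=
      (expNegSqrtLog_le_of_le_right hc.le (by positivity) (by linarith)).trans hhalf
    have := (expNegSqrtLog_pos c t).le
    gcongr
    · linarith
    · linarith
  refine (abs_psi_sub_le_of_abs_smoothedPsi_sub_le (by positivity) (by linarith) hnear).trans ?_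
  calc x / 2 * q / 2 + 2 * (C * ((3 / 2 * x) ^ 2 * (q * q))) / (x / 2 * q)
      = (9 * C + 1 / 4) * (x * q) := by
        field_simp
        ring
    _ ≤ (9 * C + 1) * (x * q) := by
        gcongr
        norm_num

lemma abs_theta_sub_le_self {x : ℝ} (hx : 0 ≤ x) : |Chebyshev.theta x - x| ≤ x := by
  have hlog : Real.log 4 ≤ 2 := by
    rw [show (4 : ℝ) = 2 ^ 2 by norm_num, Real.log_pow]
    norm_num
    linarith [Real.log_two_lt_d9]
  have hupper := (Chebyshev.theta_le_log4_mul_x hx).trans (mul_le_mul_of_nonneg_right hlog hx)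
  exact abs_le.mpr ⟨by linarith [Chebyshev.theta_nonneg x], by linarith⟩

theorem exists_abs_theta_sub_le : ∃ c C : ℝ, 0 < c ∧ c ≤ 1 / 4 ∧ 0 < C ∧
    ∀ x : ℝ, 1 ≤ x → |Chebyshev.theta x - x| ≤ C * (x * expNegSqrtLog c x) := by
  obtain ⟨c, C, hc, hc4, hC, hpsi⟩ := exists_abs_psi_sub_le
  obtain ⟨D, hD⟩ := Chebyshev.psi_sub_theta_le_mul_sqrt
  set q := expNegSqrtLog c (2 * Real.exp 1)
  have hq : 0 < q := expNegSqrtLog_pos _ _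
  refine ⟨c, C + |D| + 1 / q, hc, hc4, by positivity, fun x hx => ?_⟩
  have hx0 : 0 < x := by linarith
  have hE := expNegSqrtLog_pos c x
  rcases le_total (2 * Real.exp 1) x with hlarge | hsmall
  · have hdiff : |Chebyshev.theta x - Chebyshev.psi x| ≤ |D| * (x * expNegSqrtLog c x) := by
      rw [abs_sub_comm, abs_of_nonneg (sub_nonneg.mpr (Chebyshev.theta_le_psi x))]
      refine (hD x).trans (mul_le_mul (le_abs_self D) ?_ (Real.sqrt_nonneg x) (abs_nonneg D))
      exact sqrt_le_mul_expNegSqrtLog hc4 (by linarith [Real.exp_one_gt_d9])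
    calc |Chebyshev.theta x - x|
        ≤ |Chebyshev.theta x - Chebyshev.psi x| + |Chebyshev.psi x - x| := abs_sub_le _ _ _
      _ ≤ |D| * (x * expNegSqrtLog c x) + C * (x * expNegSqrtLog c x) :=
          add_le_add hdiff (hpsi x hlarge)
      _ = (C + |D|) * (x * expNegSqrtLog c x) := by ring
      _ ≤ (C + |D| + 1 / q) * (x * expNegSqrtLog c x) := by
          refine mul_le_mul_of_nonneg_right ?_ (by positivity)
          exact le_add_of_nonneg_right (by positivity)
  · calc |Chebyshev.theta x - x| ≤ x := abs_theta_sub_le_self hx0.le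
      _ = 1 / q * (x * q) := by field_simp
      _ ≤ (C + |D| + 1 / q) * (x * expNegSqrtLog c x) := by
          gcongr
          · exact le_add_of_nonneg_left (by positivity)
          · exact expNegSqrtLog_le_of_le_right hc.le hx0 hsmall

end ChebyshevFunctions

/-! ### The prime number theorem for `π` -/

section PrimeCounting

open MeasureTheory Set

variable {a b t y : ℝ}

lemma abs_intervalIntegral_le_sub {F F' g : ℝ → ℝ} (hab : a ≤ b)
    (hF : ∀ t ∈ Icc a b, HasDerivAt F (F' t) t) (hF' : ∀ t ∈ Icc a b, 0 ≤ F' t)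
    (hg : ∀ t ∈ Icc a b, |g t| ≤ F' t) :
    |∫ t in a..b, g t| ≤ F b - F a := by
  rw [← uIcc_of_le hab] at hF hF'
  have hint : IntervalIntegrable F' volume a b :=
    intervalIntegral.intervalIntegrable_deriv_of_nonneg
      (fun t ht => (hF t ht).continuousAt.continuousWithinAt)
      (fun t ht => hF t (Ioo_subset_Icc_self ht)) (fun t ht => hF' t (Ioo_subset_Icc_self ht))
  rw [← intervalIntegral.integral_eq_sub_of_hasDerivAt hF hint]
  simp only [← Real.norm_eq_abs] at hg ⊢
  exact intervalIntegral.norm_integral_le_of_norm_le hab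
    (.of_forall fun t ht => hg t (Ioc_subset_Icc_self ht)) hint

lemma abs_intervalIntegral_le_of_le_div_sqrt {K : ℝ} {g : ℝ → ℝ} (ha : 0 < a) (hab : a ≤ b)
    (hK : 0 ≤ K) (hg : ∀ t ∈ Icc a b, |g t| ≤ K / √t) :
    |∫ t in a..b, g t| ≤ 2 * K * √b := by
  have hderiv : ∀ t ∈ Icc a b, HasDerivAt (fun t => 2 * K * √t) (K / √t) t := fun t ht => by
    convert! (Real.hasDerivAt_sqrt (ha.trans_le ht.1).ne').const_mul (2 * K) using 1
    field_simp
  have hFa : 0 ≤ 2 * K * √a := by positivity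
  exact (abs_intervalIntegral_le_sub hab hderiv (fun t _ => by positivity) hg).trans (by linarith)

lemma abs_intervalIntegral_le_of_le_div_mul_log_sq {K : ℝ} {g : ℝ → ℝ} (ha : 1 < a) (hab : a ≤ b)
    (hK : 0 ≤ K) (hg : ∀ t ∈ Icc a b, |g t| ≤ K / (t * Real.log t ^ 2)) :
    |∫ t in a..b, g t| ≤ K / Real.log a := by
  have hderiv : ∀ t ∈ Icc a b,
      HasDerivAt (fun t => -(K * (Real.log t)⁻¹)) (K / (t * Real.log t ^ 2)) t := fun t ht => by
    have ht1 : 1 < t := ha.trans_le ht.1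
    convert! (((Real.hasDerivAt_log (by linarith)).inv (Real.log_pos ht1).ne').const_mul K).neg
      using 1
    field_simp
  have hnonneg : ∀ t ∈ Icc a b, 0 ≤ K / (t * Real.log t ^ 2) := fun t ht => by
    have : 0 < t := by linarith [ht.1]
    positivity
  have hFb : 0 ≤ K * (Real.log b)⁻¹ :=
    mul_nonneg hK (inv_nonneg.mpr (Real.log_nonneg (ha.le.trans hab)))
  refine (abs_intervalIntegral_le_sub hab hderiv hnonneg hg).trans ?_
  rw [div_eq_mul_inv]
  linarith

lemma continuousAt_one_div_log (ht : 1 < t) : ContinuousAt (fun u => 1 / Real.log u) t :=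
  continuousAt_const.div (Real.continuousAt_log (by linarith)) (Real.log_pos ht).ne'

lemma intervalIntegrable_one_div_log (ha : 1 < a) (hb : 1 < b) :
    IntervalIntegrable (fun u => 1 / Real.log u) volume a b :=
  ContinuousOn.intervalIntegrable fun _ ht =>
    (continuousAt_one_div_log ((lt_min ha hb).trans_le ht.1)).continuousWithinAt

lemma hasDerivAt_Li (hy : 1 < y) : HasDerivAt Li (1 / Real.log y) y :=
  intervalIntegral.integral_hasDerivAt_right (intervalIntegrable_one_div_log one_lt_two hy)
    (ContinuousOn.stronglyMeasurableAtFilter isOpen_Ioi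
      (fun _ hz => (continuousAt_one_div_log hz).continuousWithinAt) y hy)
    (continuousAt_one_div_log hy)

lemma Li_eq_div_log_add_integral (hy : 1 < y) :
    Li y = y / Real.log y - 2 / Real.log 2 + ∫ t in 2..y, 1 / Real.log t ^ 2 := by
  have hLi := intervalIntegrable_one_div_log one_lt_two hy
  have hsq := Chebyshev.intervalIntegrable_one_div_log_sq one_lt_two hy
  have hparts : ∫ t in 2..y, (1 / Real.log t - 1 / Real.log t ^ 2) =
      y / Real.log y - 2 / Real.log 2 := by
    refine intervalIntegral.integral_eq_sub_of_hasDerivAt (f := fun t => t / Real.log t) ?_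
      (hLi.sub hsq)
    intro t ht
    have ht1 : 1 < t := (lt_min one_lt_two hy).trans_le ht.1
    have hlog := (Real.log_pos ht1).ne'
    convert! (hasDerivAt_id t).div (Real.hasDerivAt_log (by linarith)) hlog using 1
    simp only [id]
    field_simp
  rw [Li, ← hparts, intervalIntegral.integral_sub hLi hsq, sub_add_cancel]

lemma abs_Li_le (hy : 2 ≤ y) : |Li y| ≤ 8 * y / Real.log y := by
  have hy0 : 0 < y := by linarith
  have hlog : 0 < Real.log y := by linarith [half_le_log hy]
  have hintegrand : ∀ t ∈ Icc 2 y, |1 / Real.log t| ≤ 4 * √y / Real.log y / √t := by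
    rintro t ⟨ht2, hty⟩
    have ht0 : 0 < t := by linarith
    have hlogt := half_le_log ht2
    have hratio : 1 ≤ √(y / t) := Real.one_le_sqrt.mpr ((one_le_div ht0).mpr hty)
    have hlogy : Real.log y = Real.log t + 2 * Real.log √(y / t) := by
      rw [Real.log_sqrt (by positivity), Real.log_div hy0.ne' ht0.ne']
      ring
    have hmul : Real.log y ≤ 4 * √(y / t) * Real.log t := by
      have := Real.log_le_sub_one_of_pos (by linarith : 0 < √(y / t))
      nlinarith
    rw [abs_of_pos (by positivity), div_right_comm, mul_div_assoc, ← Real.sqrt_div hy0.le,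
      div_le_div_iff₀ (by linarith) hlog]
    linarith
  calc |Li y| ≤ 2 * (4 * √y / Real.log y) * √y :=
        abs_intervalIntegral_le_of_le_div_sqrt two_pos hy (by positivity) hintegrand
    _ = 8 * (√y * √y) / Real.log y := by ring
    _ = 8 * y / Real.log y := by rw [Real.mul_self_sqrt hy0.le]

lemma primePi_eq_primeCounting_floor (y : ℝ) : primePi y = Nat.primeCounting ⌊y⌋₊ := by
  rw [primePi, ← Nat.primesLE_card_eq_primeCounting, ← Set.ncard_coe_finset]
  congr 1
  ext p
  simp only [mem_ofPred_eq, SetLike.mem_coe, Nat.mem_primesLE]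
  exact ⟨fun h => ⟨(Nat.le_floor_iff' h.1.ne_zero).mpr h.2, h.1⟩,
    fun h => ⟨h.2, (Nat.le_floor_iff' h.2.ne_zero).mp h.1⟩⟩

lemma primePi_sub_Li_eq (hy : 2 ≤ y) :
    primePi y - Li y = (Chebyshev.theta y - y) / Real.log y + 2 / Real.log 2 +
      ∫ t in 2..y, (Chebyshev.theta t - t) / (t * Real.log t ^ 2) := by
  have htheta : IntervalIntegrable (fun t => Chebyshev.theta t / (t * Real.log t ^ 2)) volume 2 y :=
    (intervalIntegrable_iff_integrableOn_Icc_of_le hy).mpr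
      (Chebyshev.integrableOn_theta_div_id_mul_log_sq y)
  have hsplit : ∫ t in 2..y, (Chebyshev.theta t - t) / (t * Real.log t ^ 2) =
      (∫ t in 2..y, Chebyshev.theta t / (t * Real.log t ^ 2)) -
        ∫ t in 2..y, 1 / Real.log t ^ 2 := by
    rw [← intervalIntegral.integral_sub htheta
      (Chebyshev.intervalIntegrable_one_div_log_sq one_lt_two (by linarith))]
    refine intervalIntegral.integral_congr fun t ht => ?_
    rw [uIcc_of_le hy] at ht
    have ht0 : t ≠ 0 := by linarith [ht.1]
    simp only [sub_div, div_mul_cancel_left₀ ht0, one_div]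
  rw [primePi_eq_primeCounting_floor, Chebyshev.primeCounting_eq_theta_div_log_add_integral hy,
    Li_eq_div_log_add_integral (by linarith), hsplit]
  ring

lemma abs_integral_theta_sub_le {c C : ℝ} (hc : c ≤ 1 / 4) (hC : 0 ≤ C)
    (htheta : ∀ t, 1 ≤ t → |Chebyshev.theta t - t| ≤ C * (t * expNegSqrtLog c t)) (hy : 2 ≤ y) :
    |∫ t in 2..y, (Chebyshev.theta t - t) / (t * Real.log t ^ 2)| ≤
      8 * C * (y * expNegSqrtLog c y) := by
  have hE := expNegSqrtLog_pos c y
  have hintegrand : ∀ t ∈ Icc 2 y, |(Chebyshev.theta t - t) / (t * Real.log t ^ 2)| ≤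
      4 * C * (√y * expNegSqrtLog c y) / √t := by
    rintro t ⟨ht2, hty⟩
    have : 0 < t := by linarith
    have hlog0 : 0 < Real.log t := by linarith [half_le_log ht2]
    have hlog : 1 ≤ 4 * Real.log t ^ 2 := by nlinarith [half_le_log ht2]
    have := expNegSqrtLog_pos c t
    have hmono : √t * expNegSqrtLog c t ≤ √y * expNegSqrtLog c y :=
      monotoneOn_sqrt_mul_expNegSqrtLog hc ht2 hy hty
    rw [abs_div, abs_of_pos (by positivity : 0 < t * Real.log t ^ 2),
      div_le_div_iff₀ (by positivity) (by positivity)]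
    calc |Chebyshev.theta t - t| * √t ≤ C * (t * expNegSqrtLog c t) * √t := by
          gcongr
          exact htheta t (by linarith)
      _ = C * t * (√t * expNegSqrtLog c t) * 1 := by ring
      _ ≤ C * t * (√y * expNegSqrtLog c y) * (4 * Real.log t ^ 2) := by gcongr
      _ = 4 * C * (√y * expNegSqrtLog c y) * (t * Real.log t ^ 2) := by ring
  calc |∫ t in 2..y, (Chebyshev.theta t - t) / (t * Real.log t ^ 2)|
      ≤ 2 * (4 * C * (√y * expNegSqrtLog c y)) * √y :=
        abs_intervalIntegral_le_of_le_div_sqrt two_pos hy (by positivity) hintegrand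
    _ = 8 * C * ((√y * √y) * expNegSqrtLog c y) := by ring
    _ = 8 * C * (y * expNegSqrtLog c y) := by rw [Real.mul_self_sqrt (by linarith)]

theorem exists_abs_primePi_sub_Li_le : ∃ c C : ℝ, 0 < c ∧ 0 < C ∧
    ∀ y : ℝ, 2 ≤ y → |primePi y - Li y| ≤ C * (y * expNegSqrtLog c y) := by
  obtain ⟨c, C, hc, hc4, hC, htheta⟩ := exists_abs_theta_sub_le
  refine ⟨c, 2 * C + 4 + 8 * C, hc, by positivity, fun y hy => ?_⟩
  have hE := expNegSqrtLog_pos c y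
  have hlog := half_le_log hy
  have hmain : |(Chebyshev.theta y - y) / Real.log y| ≤ 2 * C * (y * expNegSqrtLog c y) :=
    calc |(Chebyshev.theta y - y) / Real.log y|
        ≤ C * (y * expNegSqrtLog c y) / (1 / 2) := by
          rw [abs_div, abs_of_pos (by linarith : 0 < Real.log y)]
          gcongr
          exact htheta y (by linarith)
      _ = 2 * C * (y * expNegSqrtLog c y) := by ring
  have hconst : |2 / Real.log 2| ≤ 4 * (y * expNegSqrtLog c y) := by
    rw [abs_of_pos (by positivity), div_le_iff₀ (Real.log_pos one_lt_two)]
    nlinarith [half_le_log le_rfl, one_le_mul_expNegSqrtLog hc4 hy]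
  rw [primePi_sub_Li_eq hy]
  refine (abs_add_three _ _ _).trans ?_
  linarith [abs_integral_theta_sub_le hc4 hC.le htheta hy]

end PrimeCounting

/-! ### Partial summation over primes -/

section PartialSummation

open MeasureTheory Set

variable {a b : ℝ} {f f' : ℝ → ℝ}

lemma sum_Icc_ite_prime_eq_primePi (t : ℝ) :
    ∑ k ∈ Finset.Icc 0 ⌊t⌋₊, (if k.Prime then (1 : ℝ) else 0) = primePi t := by
  rw [primePi_eq_primeCounting_floor, ← Nat.primesLE_card_eq_primeCounting,
    Nat.primesLE_eq_filter_Icc_zero, Finset.sum_boole]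

lemma mem_filter_prime_Ioc_floor {p : ℕ} :
    p ∈ (Finset.Ioc ⌊a⌋₊ ⌊b⌋₊).filter Nat.Prime ↔ p.Prime ∧ a < p ∧ (p : ℝ) ≤ b := by
  rw [Finset.mem_filter, Finset.mem_Ioc, and_comm]
  exact and_congr_right fun hp =>
    and_congr (Nat.floor_lt' hp.ne_zero) (Nat.le_floor_iff' hp.ne_zero)

lemma intervalIntegrable_mul_primePi (ha : 0 ≤ a) (hab : a ≤ b) (hf : ContinuousOn f (Icc a b)) :
    IntervalIntegrable (fun t => f t * primePi t) volume a b := by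
  rw [intervalIntegrable_iff_integrableOn_Icc_of_le hab]
  simpa only [sum_Icc_ite_prime_eq_primePi] using
    integrableOn_mul_sum_Icc (m := 0) (fun k => if k.Prime then (1 : ℝ) else 0) ha
      hf.integrableOn_Icc

lemma sum_primes_eq_sub_sub_integral_mul_primePi (ha : 0 ≤ a) (hab : a ≤ b)
    (hf : ∀ t ∈ Icc a b, HasDerivAt f (f' t) t) (hf' : ContinuousOn f' (Icc a b)) :
    ∑ p ∈ (Finset.Ioc ⌊a⌋₊ ⌊b⌋₊).filter Nat.Prime, f p =
      f b * primePi b - f a * primePi a - ∫ t in a..b, f' t * primePi t := by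
  have hderiv : IntegrableOn (deriv f) (Icc a b) :=
    hf'.integrableOn_Icc.congr_fun (fun t ht => (hf t ht).deriv.symm) measurableSet_Icc
  have habel := sum_mul_eq_sub_sub_integral_mul (fun k => if k.Prime then (1 : ℝ) else 0) ha hab
    (fun t ht => (hf t ht).differentiableAt) hderiv
  simp only [sum_Icc_ite_prime_eq_primePi, mul_ite, mul_one, mul_zero] at habel
  rw [Finset.sum_filter, habel, intervalIntegral.integral_of_le hab]
  congr 1
  exact setIntegral_congr_fun measurableSet_Ioc fun t ht => by
    rw [(hf t (Ioc_subset_Icc_self ht)).deriv]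

lemma intervalIntegrable_mul_Li (ha : 1 < a) (hab : a ≤ b) (hf : ContinuousOn f (Icc a b)) :
    IntervalIntegrable (fun t => f t * Li t) volume a b := by
  refine (hf.mul fun t ht => ?_).intervalIntegrable_of_Icc hab
  exact (hasDerivAt_Li (ha.trans_le ht.1)).continuousAt.continuousWithinAt

lemma integral_div_log_eq_sub_sub_integral_mul_Li (ha : 1 < a) (hab : a ≤ b)
    (hf : ∀ t ∈ Icc a b, HasDerivAt f (f' t) t) (hf' : ContinuousOn f' (Icc a b)) :
    ∫ u in a..b, f u / Real.log u = f b * Li b - f a * Li a - ∫ t in a..b, f' t * Li t := by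
  simp only [div_eq_mul_one_div (f _)]
  refine intervalIntegral.integral_mul_deriv_eq_deriv_mul (by rwa [uIcc_of_le hab])
    (fun t ht => hasDerivAt_Li ?_) (hf'.intervalIntegrable_of_Icc hab)
    (intervalIntegrable_one_div_log ha (ha.trans_le hab))
  rw [uIcc_of_le hab] at ht
  exact ha.trans_le ht.1

theorem sum_primes_sub_integral_div_log_eq (ha : 1 < a) (hab : a ≤ b)
    (hf : ∀ t ∈ Icc a b, HasDerivAt f (f' t) t) (hf' : ContinuousOn f' (Icc a b)) :
    ∑ p ∈ (Finset.Ioc ⌊a⌋₊ ⌊b⌋₊).filter Nat.Prime, f p - ∫ u in a..b, f u / Real.log u =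
      f b * (primePi b - Li b) - f a * (primePi a - Li a) -
        ∫ t in a..b, f' t * (primePi t - Li t) := by
  have ha0 : 0 ≤ a := by linarith
  simp only [mul_sub]
  rw [sum_primes_eq_sub_sub_integral_mul_primePi ha0 hab hf hf',
    integral_div_log_eq_sub_sub_integral_mul_Li ha hab hf hf',
    intervalIntegral.integral_sub (intervalIntegrable_mul_primePi ha0 hab hf')
      (intervalIntegrable_mul_Li ha hab hf')]
  ring

end PartialSummation

/-! ### The sum of `π (x / p)` -/

section SumPrimePi

open Set

variable {a c C t x : ℝ}

lemma sqrt_le_div (ht : 0 < t) (htx : t ≤ √x) : √x ≤ x / t := by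
  have hx : 0 ≤ x := (Real.sqrt_pos.mp (ht.trans_le htx)).le
  rw [le_div_iff₀ ht]
  exact (mul_le_mul_of_nonneg_left htx (Real.sqrt_nonneg x)).trans_eq (Real.mul_self_sqrt hx)

lemma half_log_le_log_div (ht : 0 < t) (htx : t ≤ √x) :
    Real.log x / 2 ≤ Real.log (x / t) := by
  have hsqrt : 0 < √x := ht.trans_le htx
  rw [← Real.log_sqrt (Real.sqrt_pos.mp hsqrt).le]
  exact Real.log_le_log hsqrt (sqrt_le_div ht htx)

lemma hasDerivAt_Li_div (ht : t ≠ 0) (htx : 1 < x / t) :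
    HasDerivAt (fun u => Li (x / u)) (1 / Real.log (x / t) * -(x / t ^ 2)) t := by
  have hdiv : HasDerivAt (fun u => x / u) (-(x / t ^ 2)) t := by
    convert! (hasDerivAt_inv ht).const_mul x using 1
    ring
  exact (hasDerivAt_Li htx).comp t hdiv

lemma log_sq_mul_expNegSqrtLog_le_half (hc : 0 < c) (hx : 1 ≤ x) :
    Real.log x ^ 2 * expNegSqrtLog c x ≤ 384 / c ^ 4 * expNegSqrtLog (c / 2) x := by
  have hlog := log_pow_mul_expNegSqrtLog_le (half_pos hc) hx 2
  have hconst : (Nat.factorial (2 * 2) : ℝ) / (c / 2) ^ (2 * 2) = 384 / c ^ 4 := by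
    rw [show Nat.factorial (2 * 2) = 24 from rfl]
    push_cast
    ring
  rw [hconst] at hlog
  rw [← expNegSqrtLog_half_mul_self c, ← mul_assoc]
  exact mul_le_mul_of_nonneg_right hlog (expNegSqrtLog_pos _ _).le

lemma sum_inv_primes_le (a : ℝ) {b : ℝ} (hb : 2 ≤ b) :
    ∑ p ∈ (Finset.Ioc ⌊a⌋₊ ⌊b⌋₊).filter Nat.Prime, (p : ℝ)⁻¹ ≤ 3 * Real.log b := by
  have hharmonic := harmonic_floor_le_one_add_log b (by linarith)
  rw [harmonic_eq_sum_Icc] at hharmonic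
  push_cast at hharmonic
  calc ∑ p ∈ (Finset.Ioc ⌊a⌋₊ ⌊b⌋₊).filter Nat.Prime, (p : ℝ)⁻¹
      ≤ ∑ n ∈ Finset.Icc 1 ⌊b⌋₊, (n : ℝ)⁻¹ := by
        refine Finset.sum_le_sum_of_subset_of_nonneg (fun p hp => ?_) fun _ _ _ => by positivity
        obtain ⟨hmem, hp⟩ := Finset.mem_filter.mp hp
        exact Finset.mem_Icc.mpr ⟨hp.one_le, (Finset.mem_Ioc.mp hmem).2⟩
    _ ≤ 3 * Real.log b := by linarith [half_le_log hb]

lemma abs_sum_primePi_div_sub_Li_div_le_mul_log (hc : 0 ≤ c) (hC : 0 ≤ C)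
    (hPNT : ∀ y, 2 ≤ y → |primePi y - Li y| ≤ C * (y * expNegSqrtLog c y))
    (ha : 0 ≤ a) (hx : 2 ≤ √x) :
    |∑ p ∈ (Finset.Ioc ⌊a⌋₊ ⌊√x⌋₊).filter Nat.Prime, ((primePi (x / p) : ℝ) - Li (x / p))| ≤
      C * x * expNegSqrtLog c √x * (3 * Real.log √x) := by
  have hx0 : 0 < x := Real.sqrt_pos.mp (by linarith)
  have hE := expNegSqrtLog_pos c √x
  have hterm : ∀ p ∈ (Finset.Ioc ⌊a⌋₊ ⌊√x⌋₊).filter Nat.Prime,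
      |(primePi (x / p) : ℝ) - Li (x / p)| ≤ C * x * expNegSqrtLog c √x * (p : ℝ)⁻¹ := by
    intro p hp
    obtain ⟨-, hap, hpx⟩ := mem_filter_prime_Ioc_floor.mp hp
    have hle := sqrt_le_div (ha.trans_lt hap) hpx
    calc |(primePi (x / p) : ℝ) - Li (x / p)| ≤ C * (x / p * expNegSqrtLog c (x / p)) :=
          hPNT _ (hx.trans hle)
      _ ≤ C * (x / p * expNegSqrtLog c √x) := by
          gcongr
          exact expNegSqrtLog_le_of_le_right hc (by linarith) hle
      _ = C * x * expNegSqrtLog c √x * (p : ℝ)⁻¹ := by ring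
  refine (Finset.abs_sum_le_sum_abs _ _).trans ((Finset.sum_le_sum hterm).trans ?_)
  rw [← Finset.mul_sum]
  gcongr
  exact sum_inv_primes_le a hx

lemma abs_sum_primePi_div_sub_Li_div_le (hc : 0 < c) (hC : 0 ≤ C)
    (hPNT : ∀ y, 2 ≤ y → |primePi y - Li y| ≤ C * (y * expNegSqrtLog c y))
    (ha : 2 ≤ a) (hax : a ≤ √x) :
    |∑ p ∈ (Finset.Ioc ⌊a⌋₊ ⌊√x⌋₊).filter Nat.Prime, ((primePi (x / p) : ℝ) - Li (x / p))| ≤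
      2304 * C / c ^ 4 * (x / Real.log x * expNegSqrtLog (c / 2) a) := by
  have hsqrt : 2 ≤ √x := ha.trans hax
  have hx : 0 < x := Real.sqrt_pos.mp (by linarith)
  have hlog : Real.log x = 2 * Real.log √x := by rw [Real.log_sqrt hx.le]; ring
  have hlog0 : 0 < Real.log √x := by linarith [half_le_log hsqrt]
  have hdecay : Real.log √x ^ 2 * expNegSqrtLog c √x ≤
      384 / c ^ 4 * expNegSqrtLog (c / 2) a :=
    (log_sq_mul_expNegSqrtLog_le_half hc (one_le_two.trans hsqrt)).trans (by
      gcongr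
      exact expNegSqrtLog_le_of_le_right (by linarith) (by linarith) hax)
  calc |∑ p ∈ (Finset.Ioc ⌊a⌋₊ ⌊√x⌋₊).filter Nat.Prime, ((primePi (x / p) : ℝ) - Li (x / p))|
      ≤ C * x * expNegSqrtLog c √x * (3 * Real.log √x) :=
        abs_sum_primePi_div_sub_Li_div_le_mul_log hc.le hC hPNT (by linarith) hsqrt
    _ = 6 * C * (x / Real.log x) * (Real.log √x ^ 2 * expNegSqrtLog c √x) := by
        rw [hlog]
        field_simp
        ring
    _ ≤ 6 * C * (x / Real.log x) * (384 / c ^ 4 * expNegSqrtLog (c / 2) a) := by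
        rw [hlog]
        gcongr
    _ = 2304 * C / c ^ 4 * (x / Real.log x * expNegSqrtLog (c / 2) a) := by ring

lemma abs_Li_div_mul_primePi_sub_Li_le (hc : 0 ≤ c) (hC : 0 ≤ C)
    (hPNT : ∀ y, 2 ≤ y → |primePi y - Li y| ≤ C * (y * expNegSqrtLog c y))
    (ha : 2 ≤ a) (hat : a ≤ t) (htx : t ≤ √x) :
    |Li (x / t) * (primePi t - Li t)| ≤
      16 * C * (x / Real.log x * expNegSqrtLog (c / 2) a) := by
  have ht : 2 ≤ t := ha.trans hat
  have ht0 : 0 < t := by linarith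
  have hx : 4 ≤ x := by
    rw [show (4 : ℝ) = 2 ^ 2 by norm_num]
    exact (Real.le_sqrt' two_pos).mp (ht.trans htx)
  have : 0 < x := by linarith
  have hlog : 0 < Real.log x := Real.log_pos (by linarith)
  have hdecay : expNegSqrtLog c t ≤ expNegSqrtLog (c / 2) a :=
    (expNegSqrtLog_le_of_le_right hc (by linarith) hat).trans
      (expNegSqrtLog_le_of_le_left (by linarith) a)
  have hLi : |Li (x / t)| ≤ 8 * (x / t) / (Real.log x / 2) :=
    (abs_Li_le (ht.trans (htx.trans (sqrt_le_div ht0 htx)))).trans (by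
      gcongr
      exact half_log_le_log_div ht0 htx)
  calc |Li (x / t) * (primePi t - Li t)|
      ≤ 8 * (x / t) / (Real.log x / 2) * (C * (t * expNegSqrtLog (c / 2) a)) := by
        rw [abs_mul]
        gcongr
        exact (hPNT t ht).trans (by gcongr)
    _ = 16 * C * (x / Real.log x * expNegSqrtLog (c / 2) a) := by
        field_simp
        ring

lemma abs_integral_deriv_Li_div_mul_primePi_sub_Li_le (hc : 0 < c) (hC : 0 ≤ C)
    (hPNT : ∀ y, 2 ≤ y → |primePi y - Li y| ≤ C * (y * expNegSqrtLog c y))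
    (ha : 2 ≤ a) (hax : a ≤ √x) :
    |∫ t in a..√x, 1 / Real.log (x / t) * -(x / t ^ 2) * (primePi t - Li t)| ≤
      1536 * C / c ^ 4 * (x / Real.log x * expNegSqrtLog (c / 2) a) := by
  have hx0 : 0 < x := Real.sqrt_pos.mp (by linarith)
  have hlog : 0 < Real.log x := Real.log_pos (by nlinarith [Real.sq_sqrt hx0.le])
  have hEa := expNegSqrtLog_pos (c / 2) a
  have hintegrand : ∀ t ∈ Icc a √x,
      |1 / Real.log (x / t) * -(x / t ^ 2) * (primePi t - Li t)| ≤
        768 * C / c ^ 4 * (x / Real.log x * expNegSqrtLog (c / 2) a) / (t * Real.log t ^ 2) := by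
    rintro t ⟨hat, htx⟩
    have ht : 2 ≤ t := ha.trans hat
    have ht0 : 0 < t := by linarith
    have hlogt : 0 < Real.log t := by linarith [half_le_log ht]
    have hlogx := half_log_le_log_div ht0 htx
    have hlogx0 : 0 < Real.log (x / t) := by linarith
    have hdecay : Real.log t ^ 2 * expNegSqrtLog c t ≤ 384 / c ^ 4 * expNegSqrtLog (c / 2) a :=
      (log_sq_mul_expNegSqrtLog_le_half hc (by linarith)).trans (by
        gcongr
        exact expNegSqrtLog_le_of_le_right (by linarith) (by linarith) hat)
    rw [abs_mul, abs_mul, abs_neg, abs_of_pos (by positivity : 0 < x / t ^ 2),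
      abs_of_pos (by positivity : 0 < 1 / Real.log (x / t))]
    calc 1 / Real.log (x / t) * (x / t ^ 2) * |primePi t - Li t|
        ≤ 1 / (Real.log x / 2) * (x / t ^ 2) * (C * (t * expNegSqrtLog c t)) := by
          gcongr
          exact hPNT t ht
      _ = 2 * C * (x / Real.log x) * (Real.log t ^ 2 * expNegSqrtLog c t) /
            (t * Real.log t ^ 2) := by field_simp
      _ ≤ 2 * C * (x / Real.log x) * (384 / c ^ 4 * expNegSqrtLog (c / 2) a) /
            (t * Real.log t ^ 2) := by gcongr
      _ = 768 * C / c ^ 4 * (x / Real.log x * expNegSqrtLog (c / 2) a) /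
            (t * Real.log t ^ 2) := by ring
  calc |∫ t in a..√x, 1 / Real.log (x / t) * -(x / t ^ 2) * (primePi t - Li t)|
      ≤ 768 * C / c ^ 4 * (x / Real.log x * expNegSqrtLog (c / 2) a) / Real.log a :=
        abs_intervalIntegral_le_of_le_div_mul_log_sq (by linarith) hax (by positivity) hintegrand
    _ ≤ 768 * C / c ^ 4 * (x / Real.log x * expNegSqrtLog (c / 2) a) / (1 / 2) := by
        gcongr
        exact half_le_log ha
    _ = 1536 * C / c ^ 4 * (x / Real.log x * expNegSqrtLog (c / 2) a) := by ring

lemma sum_Li_div_sub_integral_eq (ha : 1 < a) (hax : a ≤ √x) :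
    ∑ p ∈ (Finset.Ioc ⌊a⌋₊ ⌊√x⌋₊).filter Nat.Prime, Li (x / p) -
        ∫ u in a..√x, Li (x / u) / Real.log u =
      Li (x / √x) * (primePi √x - Li √x) - Li (x / a) * (primePi a - Li a) -
        ∫ t in a..√x, 1 / Real.log (x / t) * -(x / t ^ 2) * (primePi t - Li t) := by
  have ht0 : ∀ t ∈ Icc a √x, t ≠ 0 := fun t ht => by linarith [ht.1]
  have hdiv : ∀ t ∈ Icc a √x, 1 < x / t := fun t ht =>
    (ha.trans_le hax).trans_le (sqrt_le_div (by linarith [ht.1]) ht.2)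
  refine sum_primes_sub_integral_div_log_eq (f := fun u => Li (x / u)) ha hax
    (fun t ht => hasDerivAt_Li_div (ht0 t ht) (hdiv t ht)) ?_
  refine .mul (continuousOn_const.div (.log (continuousOn_const.div continuousOn_id ht0) ?_) ?_)
    (continuousOn_const.div (continuousOn_id.pow 2) fun t ht => pow_ne_zero 2 (ht0 t ht)).neg
  · exact fun t ht => (zero_lt_one.trans (hdiv t ht)).ne'
  · exact fun t ht => (Real.log_pos (hdiv t ht)).ne'

theorem exists_abs_sum_primePi_div_sub_integral_le : ∃ c C : ℝ, 0 < c ∧ 0 < C ∧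
    ∀ x a : ℝ, 2 ≤ a → a ≤ √x →
      |∑ p ∈ (Finset.Ioc ⌊a⌋₊ ⌊√x⌋₊).filter Nat.Prime, (primePi (x / p) : ℝ) -
          ∫ u in a..√x, Li (x / u) / Real.log u| ≤
        C * (x / Real.log x * expNegSqrtLog c a) := by
  obtain ⟨c, C, hc, hC, hPNT⟩ := exists_abs_primePi_sub_Li_le
  refine ⟨c / 2, 3840 * C / c ^ 4 + 32 * C, half_pos hc, by positivity, fun x a ha hax => ?_⟩
  have hsum := abs_sum_primePi_div_sub_Li_div_le hc hC.le hPNT ha hax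
  have hupper := abs_Li_div_mul_primePi_sub_Li_le hc.le hC.le hPNT ha hax le_rfl
  have hlower := abs_Li_div_mul_primePi_sub_Li_le hc.le hC.le hPNT ha le_rfl hax
  have hint := abs_integral_deriv_Li_div_mul_primePi_sub_Li_le hc hC.le hPNT ha hax
  rw [Finset.sum_sub_distrib] at hsum
  rw [← sub_add_sub_cancel, sum_Li_div_sub_integral_eq (by linarith) hax]
  refine (abs_add_le _ _).trans ?_
  refine (add_le_add hsum ((abs_sub _ _).trans (add_le_add (abs_sub _ _) le_rfl))).trans ?_
  refine (add_le_add le_rfl (add_le_add (add_le_add hupper hlower) hint)).trans_eq ?_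
  ring

lemma filter_range_prime_eq (a b : ℝ) :
    (Finset.range (⌊b⌋₊ + 1)).filter (fun p : ℕ => p.Prime ∧ a < (p : ℝ) ∧ (p : ℝ) ≤ b) =
      (Finset.Ioc ⌊a⌋₊ ⌊b⌋₊).filter Nat.Prime := by
  ext p
  rw [mem_filter_prime_Ioc_floor, Finset.mem_filter, Finset.mem_range, Nat.lt_succ_iff]
  exact and_iff_right_of_imp fun h => (Nat.le_floor_iff' h.1.ne_zero).mpr h.2.2

end SumPrimePi

theorem stmt_16 :
    ∃ c C : ℝ, 0 < c ∧ 0 < C ∧ ∀ x r : ℝ, 1 ≤ r → r ≤ x / 4 →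
      |(∑ p ∈ (Finset.range (⌊Real.sqrt x⌋₊ + 1)).filter
            (fun p : ℕ => p.Prime ∧ Real.sqrt (x / r) < (p : ℝ) ∧ (p : ℝ) ≤ Real.sqrt x),
          (primePi (x / p) : ℝ))
        - ∫ u in Real.sqrt (x / r)..Real.sqrt x, Li (x / u) / Real.log u| ≤
        C * (x / Real.log x * Real.exp (-c * Real.sqrt (Real.log (x / r)))) := by
  obtain ⟨c, C, hc, hC, hbound⟩ := exists_abs_sum_primePi_div_sub_integral_le
  refine ⟨c / 2, C, half_pos hc, hC, fun x r hr hrx => ?_⟩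
  have hxr : 4 ≤ x / r := by rw [le_div_iff₀ (by linarith)]; linarith
  have hlower : 2 ≤ √(x / r) := Real.le_sqrt_of_sq_le (by linarith)
  have hupper : √(x / r) ≤ √x := Real.sqrt_le_sqrt (div_le_self (by linarith) hr)
  have hdecay : expNegSqrtLog c √(x / r) ≤ expNegSqrtLog (c / 2) (x / r) :=
    expNegSqrtLog_sqrt_le hc.le (by linarith)
  have hratio : 0 ≤ x / Real.log x := div_nonneg (by linarith) (Real.log_nonneg (by linarith))
  rw [filter_range_prime_eq]
  refine (hbound x _ hlower hupper).trans ?_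
  change _ ≤ C * (x / Real.log x * expNegSqrtLog (c / 2) (x / r))
  gcongr
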